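/- arXiv:2505.20519 — 3 statements merged into one kernel-verified Lean document; each statement's English description precedes it below -/
import Mathlib

section
/- In the bipartite Bell scenario where one party (Alice) has exactly two measurement settings, each with two outcomes, and the other party (Bob) has arbitrary finite numbers of settings and outcomes, every convexly extremal quantum correlation is realizable by measurements on a pure two-qubit state, i.e. with local Hilbert space dimensions (2, 2). -/
/-!
Bob can be eliminated. A bipartite realization gives on Alice's side an *assemblage*
`σ y b = Tr_B (ρ (1 ⊗ N y b))` of positive matrices whose sum over `b` does not depend on `y`
(`RealizesBi.exists_steer`), and conversely an assemblage on `ℂ^d` arises from a pure state on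
`ℂ^d ⊗ ℂ^d`, by the Gisin–Hughston–Jozsa–Wootters construction (`Steer.realizesBiPure`). It
therefore suffices to bring Alice's dimension down to two.

An effect `0 ≤ E ≤ 1` is a proper convex mixture of a projection and another effect
(`Eff.exists_mixture`), and the correlation is affine in each of Alice's effects, so extremality
allows both effects to be taken projective (`exists_projective`). By Jordan's analysis of two
projections, some subspace of dimension at most two is invariant under both of them and has positive
weight `q` in Alice's reduced state (`exists_jordan_block`). Let `W` be the projection onto it. Since
`W` commutes with the effects, each `σ y b` may be replaced by
`W σ W + (1 - W) σ (1 - W)`, which exhibits the correlation as a proper mixture of the one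
of the normalised assemblage `W σ W / q` and another one. By extremality it equals the former, which
is carried by two dimensions (`Steer.compress`).
-/

/- STATEMENT 11: in the bipartite Bell scenario where Alice has two settings with two
outcomes and Bob has arbitrary finite numbers `ny` of settings and `nb` of outcomes, every
convexly extremal quantum correlation is realizable by POVM measurements on a pure
two-qubit state, i.e. with local Hilbert space dimensions `(2, 2)`. -/

open scoped BigOperators Kronecker Matrix ComplexOrder

noncomputable section

/-- A POVM: a finite family of positive semidefinite matrices summing to the identity. -/
def IsPOVM {n : Type*} [Fintype n] [DecidableEq n] {O : Type*} [Fintype O]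
    (M : O → Matrix n n ℂ) : Prop :=
  (∀ a, (M a).PosSemidef) ∧ ∑ a, M a = 1

/-- A density matrix: positive semidefinite with unit trace. -/
def IsDensityMatrix {n : Type*} [Fintype n] [DecidableEq n] (ρ : Matrix n n ℂ) : Prop :=
  ρ.PosSemidef ∧ ρ.trace = 1

/-- `RealizesBi nx ny na nb dA dB P`: the behaviour `P x y a b = P(a,b|x,y)` of the
bipartite Bell scenario (Alice: `nx` settings, `na` outcomes; Bob: `ny` settings, `nb`
outcomes) is realized by a density matrix on `ℂ^dA ⊗ ℂ^dB` and local POVMs, i.e. with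
local Hilbert space dimensions `(dA, dB)`. -/
def RealizesBi (nx ny na nb dA dB : ℕ)
    (P : Fin nx → Fin ny → Fin na → Fin nb → ℝ) : Prop :=
  ∃ ρ : Matrix (Fin dA × Fin dB) (Fin dA × Fin dB) ℂ,
    IsDensityMatrix ρ ∧
    ∃ (M : Fin nx → Fin na → Matrix (Fin dA) (Fin dA) ℂ)
      (Nb : Fin ny → Fin nb → Matrix (Fin dB) (Fin dB) ℂ),
      (∀ xi, IsPOVM (M xi)) ∧ (∀ yi, IsPOVM (Nb yi)) ∧
      ∀ xi yi ai bi, (P xi yi ai bi : ℂ) = (ρ * (M xi ai ⊗ₖ Nb yi bi)).trace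

/-- Realization by a pure state `ψ` (with `ρ = |ψ⟩⟨ψ|`) and local POVMs, with local
Hilbert space dimensions `(dA, dB)`. -/
def RealizesBiPure (nx ny na nb dA dB : ℕ)
    (P : Fin nx → Fin ny → Fin na → Fin nb → ℝ) : Prop :=
  ∃ ψ : Fin dA × Fin dB → ℂ,
    (∑ p, Complex.normSq (ψ p)) = 1 ∧
    ∃ (M : Fin nx → Fin na → Matrix (Fin dA) (Fin dA) ℂ)
      (Nb : Fin ny → Fin nb → Matrix (Fin dB) (Fin dB) ℂ),
      (∀ xi, IsPOVM (M xi)) ∧ (∀ yi, IsPOVM (Nb yi)) ∧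
      ∀ xi yi ai bi, (P xi yi ai bi : ℂ) =
        (Matrix.vecMulVec ψ (star ψ) * (M xi ai ⊗ₖ Nb yi bi)).trace

/-- The set of all quantum correlations of the bipartite Bell scenario, with no
restriction on the local Hilbert space dimensions. -/
def QuantumSetBi (nx ny na nb : ℕ) : Set (Fin nx → Fin ny → Fin na → Fin nb → ℝ) :=
  {P | ∃ dA dB, RealizesBi nx ny na nb dA dB P}

/-- `Eff E` says that `E` is an effect: `0 ≤ E ≤ 1` in the Loewner order. -/
def Eff {n : Type*} [Fintype n] [DecidableEq n] (E : Matrix n n ℂ) : Prop :=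
  E.PosSemidef ∧ (1 - E).PosSemidef

/-! ### Functions of a diagonalized matrix -/

lemma exists_diagonalization {n : Type*} [Fintype n] [DecidableEq n] {A : Matrix n n ℂ}
    (hA : A.IsHermitian) :
    ∃ (U : Matrix n n ℂ), Uᴴ * U = 1 ∧ U * Uᴴ = 1 ∧
      A = U * Matrix.diagonal (fun i => (hA.eigenvalues i : ℂ)) * Uᴴ := by
  refine ⟨hA.eigenvectorUnitary, ?_, ?_, ?_⟩
  · exact Unitary.coe_star_mul_self _
  · exact Unitary.coe_mul_star_self _
  · have := hA.spectral_theorem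
    rw [Unitary.conjStarAlgAut_apply] at this
    exact this

/-- The matrix with real eigenvalues `f i` in the orthonormal basis formed by the columns of `U`. -/
def specMat {n : Type*} [Fintype n] [DecidableEq n] (U : Matrix n n ℂ) (f : n → ℝ) :
    Matrix n n ℂ :=
  U * Matrix.diagonal (fun i => (f i : ℂ)) * Uᴴ

section specMat
variable {n : Type*} [Fintype n] [DecidableEq n] {U : Matrix n n ℂ}

lemma specMat_mul (hU : Uᴴ * U = 1) (f g : n → ℝ) :
    specMat U f * specMat U g = specMat U (fun i => f i * g i) := by
  have : specMat U f * specMat U g = U * Matrix.diagonal (fun i => (f i : ℂ)) * (Uᴴ * U)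
      * Matrix.diagonal (fun i => (g i : ℂ)) * Uᴴ := by
    simp only [specMat, Matrix.mul_assoc]
  rw [this, hU, Matrix.mul_one, Matrix.mul_assoc U, Matrix.diagonal_mul_diagonal]
  simp [specMat]

lemma specMat_one (hU : U * Uᴴ = 1) : specMat U (fun _ => 1) = 1 := by
  simp [specMat, hU]

lemma specMat_add (f g : n → ℝ) :
    specMat U (fun i => f i + g i) = specMat U f + specMat U g := by
  rw [specMat, specMat, specMat, ← Matrix.add_mul, ← Matrix.mul_add, Matrix.diagonal_add]
  simp

lemma specMat_sub (f g : n → ℝ) :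
    specMat U (fun i => f i - g i) = specMat U f - specMat U g := by
  rw [eq_sub_iff_add_eq, ← specMat_add]; simp

lemma specMat_smul (c : ℝ) (f : n → ℝ) :
    specMat U (fun i => c * f i) = (c : ℂ) • specMat U f := by
  have : Matrix.diagonal (fun i => ((c * f i : ℝ) : ℂ))
      = (c : ℂ) • Matrix.diagonal (fun i => (f i : ℂ)) := by
    ext i j
    by_cases h : i = j
    · subst h; simp
    · simp [h]
  rw [specMat, this]
  simp [specMat]

lemma specMat_posSemidef {f : n → ℝ} (hf : ∀ i, 0 ≤ f i) : (specMat U f).PosSemidef := by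
  apply Matrix.PosSemidef.mul_mul_conjTranspose_same
  apply Matrix.PosSemidef.diagonal
  intro i
  simpa using hf i

lemma specMat_hermitian (f : n → ℝ) : (specMat U f)ᴴ = specMat U f := by
  simp only [specMat, Matrix.conjTranspose_mul, Matrix.conjTranspose_conjTranspose,
    Matrix.diagonal_conjTranspose, Matrix.mul_assoc]
  congr 3
  ext i; simp

lemma specMat_eff (hU : U * Uᴴ = 1) {f : n → ℝ} (h0 : ∀ i, 0 ≤ f i) (h1 : ∀ i, f i ≤ 1) :
    Eff (specMat U f) := by
  refine ⟨specMat_posSemidef h0, ?_⟩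
  rw [← specMat_one hU, ← specMat_sub]
  exact specMat_posSemidef fun i => sub_nonneg.2 (h1 i)

end specMat

/-! ### Effects as mixtures of projections -/

/-- Every effect is a proper mixture of a projection (the projection onto its support) and another
effect. This replaces a Naimark dilation in the reduction to projective measurements. -/
lemma Eff.exists_mixture {n : Type*} [Fintype n] [DecidableEq n] {E : Matrix n n ℂ} (hE : Eff E) :
    ∃ (c : ℝ) (Q F : Matrix n n ℂ), 0 < c ∧ c < 1 ∧ Eff Q ∧ Q * Q = Q ∧ Eff F ∧
      E = (c : ℂ) • Q + ((1 - c : ℝ) : ℂ) • F := by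
  obtain ⟨U, hU, hU', hE'⟩ := exists_diagonalization hE.1.1
  set l := hE.1.1.eigenvalues
  have l0 : ∀ i, 0 ≤ l i := hE.1.eigenvalues_nonneg
  have l1 : ∀ i, l i ≤ 1 := by
    intro i
    have h := (hE.2.conjTranspose_mul_mul_same U).diag_nonneg (i := i)
    have e : Uᴴ * (1 - E) * U = 1 - Matrix.diagonal (fun i => (l i : ℂ)) := by
      have : Uᴴ * (1 - E) * U = Uᴴ * U - (Uᴴ * U) * Matrix.diagonal (fun i => (l i : ℂ))
          * (Uᴴ * U) := by
        rw [Matrix.mul_sub, Matrix.sub_mul]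
        conv_lhs => rw [hE']
        simp only [Matrix.mul_assoc, Matrix.mul_one]
      rw [this, hU]; simp
    rw [e] at h
    simp only [Matrix.sub_apply, Matrix.one_apply_eq, Matrix.diagonal_apply_eq] at h
    rw [sub_nonneg] at h
    exact_mod_cast h
  -- any small enough `c` lies below every nonzero eigenvalue
  obtain ⟨c, hc0, hc1, hc⟩ : ∃ c : ℝ, 0 < c ∧ c < 1 ∧ ∀ i, l i ≠ 0 → c ≤ l i := by
    have h1 : ∀ᶠ c in nhdsWithin (0:ℝ) (Set.Ioi 0), ∀ i, l i ≠ 0 → c ≤ l i := by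
      rw [Filter.eventually_all]
      intro i
      by_cases h : l i = 0
      · simp [h]
      · have : (0:ℝ) < l i := lt_of_le_of_ne (l0 i) (Ne.symm h)
        filter_upwards [Ioo_mem_nhdsGT this] with c hc _ using hc.2.le
    have h2 := Ioo_mem_nhdsGT (zero_lt_one (α := ℝ))
    obtain ⟨c, hc, hc'⟩ := (h1.and h2).exists
    exact ⟨c, hc'.1, hc'.2, hc⟩
  have h1c : 0 < 1 - c := by linarith
  refine ⟨c, specMat U (fun i => if l i = 0 then 0 else 1),
    specMat U (fun i => if l i = 0 then 0 else (l i - c) / (1 - c)), hc0, hc1, ?_, ?_, ?_, ?_⟩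
  · apply specMat_eff hU' <;> intro i <;> split_ifs <;> norm_num
  · rw [specMat_mul hU]
    congr 1; ext i; split_ifs <;> simp
  · apply specMat_eff hU' <;> intro i <;> split_ifs with h
    · norm_num
    · exact div_nonneg (sub_nonneg.2 (hc i h)) h1c.le
    · norm_num
    · rw [div_le_one h1c]; linarith [l1 i]
  · rw [← specMat_smul, ← specMat_smul, ← specMat_add]
    conv_lhs => rw [hE']
    change specMat U l = _
    congr 1; ext i
    split_ifs with h
    · simp [h]
    · field_simp; ring

/-! ### Two projections: blocks of dimension at most two -/

open Matrix in
/-- The Jordan step: for projections `E`, `F`, some joint invariant subspace of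
dimension at most two carries weight of `ρ`. The columns of `J` are an orthonormal basis of
that subspace, padded with a zero column when its dimension is one. -/
lemma exists_jordan_block {n : Type*} [Fintype n] [DecidableEq n] {E F ρ : Matrix n n ℂ}
    (hE : Eᴴ = E) (hF : Fᴴ = F) (hEE : E * E = E) (hFF : F * F = F)
    (hρ : ρ.PosSemidef) (hρ1 : ρ.trace = 1) :
    ∃ J : Matrix n (Fin 2) ℂ, (J * Jᴴ) * (J * Jᴴ) = J * Jᴴ ∧
      (J * Jᴴ) * E = E * (J * Jᴴ) ∧ (J * Jᴴ) * F = F * (J * Jᴴ) ∧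
      0 < ((J * Jᴴ) * ρ).trace.re := by
  -- `Z` is block diagonal for `ran E ⊕ ker E`, with spectrum at least `1` on the first summand and
  -- at most `-1` on the second, so that each of its eigenvectors lies in one of the two summands
  set Z : Matrix n n ℂ := E * (F + 1) * E - (1 - E) * (F + 1) * (1 - E) with hZ
  have hZh : Z.IsHermitian := by
    simp [Matrix.IsHermitian, hZ, hE, hF, Matrix.mul_assoc]
  obtain ⟨U, hU, hU', hZU⟩ := exists_diagonalization hZh
  set l := hZh.eigenvalues
  -- an eigenvector of `Z` on which `ρ` has positive expectation
  obtain ⟨i, hi⟩ : ∃ i, 0 < ((Uᴴ * ρ * U) i i).re := by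
    by_contra! hcon
    have h1 : (Uᴴ * ρ * U).trace = 1 := by
      rw [Matrix.trace_mul_comm, ← Matrix.mul_assoc, hU', Matrix.one_mul, hρ1]
    have h2 := congrArg Complex.re h1
    simp only [Matrix.trace, Matrix.diag, Complex.re_sum, Complex.one_re] at h2
    have : ∑ i, ((Uᴴ * ρ * U) i i).re ≤ 0 := Finset.sum_nonpos fun i _ => hcon i
    linarith
  set v : n → ℂ := fun k => U k i with hv
  have hvU : v = U *ᵥ Pi.single i 1 := by ext k; simp [hv]
  have hvv : star v ⬝ᵥ v = 1 := by
    have := congrFun (congrFun hU i) i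
    rw [Matrix.one_apply_eq] at this
    rw [← this]; rfl
  have hvρ : star v ⬝ᵥ (ρ *ᵥ v) = (Uᴴ * ρ * U) i i := by
    rw [Matrix.mul_assoc]; rfl
  have hZv : Z *ᵥ v = (l i : ℂ) • v := by
    rw [hvU, hZU, Matrix.mulVec_mulVec, Matrix.mul_assoc, hU, Matrix.mul_one,
      ← Matrix.mulVec_mulVec]
    simp
  generalize l i = μ at hZv
  -- an operator identity `Q (F + 1) Q = m` on `Q v` forces `Q v = 0` or `1 ≤ m`
  have key : ∀ (Q : Matrix n n ℂ) (m : ℝ), Qᴴ = Q → Q * Q = Q →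
      (Q * (F + 1) * Q) *ᵥ v = (m : ℂ) • (Q *ᵥ v) → Q *ᵥ v = 0 ∨ 1 ≤ m := by
    intro Q m hQ hQQ h
    by_contra! hcon
    obtain ⟨hne, hm⟩ := hcon
    have e1 : star v ⬝ᵥ ((Q * (F + 1) * Q) *ᵥ v) =
        star (F *ᵥ (Q *ᵥ v)) ⬝ᵥ (F *ᵥ (Q *ᵥ v)) + star (Q *ᵥ v) ⬝ᵥ (Q *ᵥ v) := by
      rw [Matrix.star_mulVec, Matrix.star_mulVec, hF, hQ]
      simp only [← Matrix.dotProduct_mulVec, Matrix.mulVec_mulVec]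
      rw [← dotProduct_add, ← Matrix.add_mulVec]
      congr 2
      simp only [Matrix.mul_add, Matrix.add_mul, Matrix.mul_one, ← Matrix.mul_assoc]
      rw [Matrix.mul_assoc Q F F, hFF]
    have e2 : star v ⬝ᵥ ((m : ℂ) • (Q *ᵥ v)) = m * (star (Q *ᵥ v) ⬝ᵥ (Q *ᵥ v)) := by
      rw [Matrix.star_mulVec, hQ, ← Matrix.dotProduct_mulVec, Matrix.mulVec_mulVec, hQQ,
        dotProduct_smul, smul_eq_mul]
    rw [h, e2] at e1
    have p1 : 0 ≤ star (F *ᵥ (Q *ᵥ v)) ⬝ᵥ (F *ᵥ (Q *ᵥ v)) := dotProduct_star_self_nonneg _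
    have p2 : 0 < star (Q *ᵥ v) ⬝ᵥ (Q *ᵥ v) := by
      exact dotProduct_star_self_pos_iff.2 hne
    have e3 := congrArg Complex.re e1
    rw [Complex.re_ofReal_mul, Complex.add_re] at e3
    have p1' := (Complex.le_def.1 p1).1
    have p2' := (Complex.lt_def.1 p2).1
    simp only [Complex.zero_re] at p1' p2'
    nlinarith
  have hG : (1 - E) * (1 - E) = 1 - E := by
    simp [Matrix.mul_sub, Matrix.sub_mul, hEE]
  have hEG : E * (1 - E) = 0 := by simp [Matrix.mul_sub, hEE]
  have hGE : (1 - E) * E = 0 := by simp [Matrix.sub_mul, hEE]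
  have hEZ : E * Z = E * (F + 1) * E := by
    rw [hZ, Matrix.mul_sub]
    simp only [← Matrix.mul_assoc, hEE, hEG, Matrix.zero_mul, sub_zero]
  have hGZ : (1 - E) * Z = -((1 - E) * (F + 1) * (1 - E)) := by
    rw [hZ, Matrix.mul_sub]
    simp only [← Matrix.mul_assoc, hG, hGE, Matrix.zero_mul, zero_sub]
  have k1' : (E * (F + 1) * E) *ᵥ v = (μ : ℂ) • (E *ᵥ v) := by
    rw [← hEZ, ← Matrix.mulVec_mulVec, hZv, Matrix.mulVec_smul]
  have k2' : ((1 - E) * (F + 1) * (1 - E)) *ᵥ v = ((-μ : ℝ) : ℂ) • ((1 - E) *ᵥ v) := by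
    have : (1 - E) * (F + 1) * (1 - E) = -((1 - E) * Z) := by rw [hGZ, neg_neg]
    rw [this, Matrix.neg_mulVec, ← Matrix.mulVec_mulVec, hZv, Matrix.mulVec_smul]
    simp
  -- `v` is an eigenvector of `E`, and `E F v` is a combination of `v` and `F v`
  obtain ⟨a, b, c, hEv, hEFv⟩ : ∃ a b c : ℂ, E *ᵥ v = a • v ∧
      E *ᵥ (F *ᵥ v) = b • v + c • (F *ᵥ v) := by
    have hd : E *ᵥ v = 0 ∨ (1 - E) *ᵥ v = 0 := by
      rcases key E μ hE hEE k1' with h | h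
      · exact Or.inl h
      · rcases key (1 - E) (-μ) (by simp [hE]) hG k2' with h' | h'
        · exact Or.inr h'
        · linarith
    rcases hd with h | h
    · refine ⟨0, μ + 1, 1, by simp [h], ?_⟩
      rw [← Matrix.mulVec_mulVec, Matrix.sub_mulVec, h, ← Matrix.mulVec_mulVec,
        Matrix.add_mulVec, Matrix.sub_mulVec] at k2'
      simp only [Matrix.one_mulVec, sub_zero, Matrix.mulVec_add, h, Complex.ofReal_neg,
        add_zero] at k2'
      rw [sub_eq_iff_eq_add] at k2'
      have : E *ᵥ F *ᵥ v = F *ᵥ v + v - (-(μ : ℂ)) • v := by rw [k2']; abel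
      rw [this]; module
    · have hv1 : E *ᵥ v = v := by
        rw [Matrix.sub_mulVec, Matrix.one_mulVec, sub_eq_zero] at h
        exact h.symm
      refine ⟨1, μ - 1, 0, by simp [hv1], ?_⟩
      rw [← Matrix.mulVec_mulVec, hv1, ← Matrix.mulVec_mulVec,
        Matrix.add_mulVec, Matrix.one_mulVec, Matrix.mulVec_add, hv1] at k1'
      rw [eq_sub_of_add_eq k1']; module
  -- Gram–Schmidt applied to `v, F v`; the inverse of a vanishing norm is `0`, giving `w = 0`
  set α := star v ⬝ᵥ (F *ᵥ v) with hα
  set u := F *ᵥ v - α • v with hu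
  have hvu : star v ⬝ᵥ u = 0 := by
    rw [hu, dotProduct_sub, dotProduct_smul, hvv, smul_eq_mul, mul_one, sub_self]
  obtain ⟨r, s, hrs, hrs1⟩ : ∃ r s : ℂ, (s * r) • u = u ∧
      (star r * r * (star u ⬝ᵥ u)) • (r • u) = r • u := by
    by_cases h0 : u = 0
    · exact ⟨0, 0, by simp [h0], by simp⟩
    · have hp : 0 < star u ⬝ᵥ u := dotProduct_star_self_pos_iff.2 h0
      have hp' := Complex.lt_def.1 hp
      simp only [Complex.zero_re, Complex.zero_im] at hp'
      have hval : star u ⬝ᵥ u = ((star u ⬝ᵥ u).re : ℂ) := by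
        apply Complex.ext <;> simp [← hp'.2]
      set t := (star u ⬝ᵥ u).re
      have hs : Real.sqrt t ≠ 0 := (Real.sqrt_pos.2 hp'.1).ne'
      have hs' : (Real.sqrt t : ℂ) ≠ 0 := by exact_mod_cast hs
      refine ⟨((Real.sqrt t)⁻¹ : ℝ), Real.sqrt t, ?_, ?_⟩
      · rw [Complex.ofReal_inv, mul_inv_cancel₀ hs', one_smul]
      · rw [hval]
        have hone : star (((Real.sqrt t)⁻¹ : ℝ) : ℂ) * (((Real.sqrt t)⁻¹ : ℝ) : ℂ) * (t : ℂ)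
            = 1 := by
          rw [Complex.star_def, Complex.conj_ofReal, ← Complex.ofReal_mul, ← Complex.ofReal_mul]
          norm_cast
          rw [← mul_inv, Real.mul_self_sqrt hp'.1.le, inv_mul_cancel₀ hp'.1.ne']
        rw [hone, one_smul]
  set w := r • u with hw
  have huw : u = s • w := by rw [hw, smul_smul, hrs]
  have hvw : star v ⬝ᵥ w = 0 := by rw [hw, dotProduct_smul, hvu, smul_zero]
  have hwv : star w ⬝ᵥ v = 0 := by
    rw [Matrix.star_dotProduct, hvw, star_zero]
  have hww : (star w ⬝ᵥ w) • w = w := by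
    have : star w ⬝ᵥ w = star r * r * (star u ⬝ᵥ u) := by
      rw [hw, star_smul, smul_dotProduct, dotProduct_smul, smul_eq_mul, smul_eq_mul, mul_assoc]
    rw [this]; exact hrs1
  refine ⟨Matrix.of fun k j => ![v k, w k] j, ?_⟩
  have hJ : (Matrix.of fun k j => ![v k, w k] j : Matrix n (Fin 2) ℂ)
      * (Matrix.of fun k j => ![v k, w k] j : Matrix n (Fin 2) ℂ)ᴴ
      = vecMulVec v (star v) + vecMulVec w (star w) := by
    ext k j
    simp [Matrix.mul_apply, Matrix.vecMulVec_apply]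
  rw [hJ]
  set W := vecMulVec v (star v) + vecMulVec w (star w) with hW
  have hWx : ∀ x, W *ᵥ x = (star v ⬝ᵥ x) • v + (star w ⬝ᵥ x) • w := by
    intro x
    rw [hW, Matrix.add_mulVec, Matrix.vecMulVec_mulVec, Matrix.vecMulVec_mulVec]
    simp
  have Wv : W *ᵥ v = v := by rw [hWx, hvv, hwv]; simp
  have Ww : W *ᵥ w = w := by rw [hWx, hvw, hww]; simp
  have hWh : Wᴴ = W := by
    rw [hW]; ext k j; simp [Matrix.vecMulVec_apply, mul_comm]
  have mulW : ∀ A : Matrix n n ℂ, A * W = vecMulVec (A *ᵥ v) (star v)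
      + vecMulVec (A *ᵥ w) (star w) := by
    intro A
    rw [hW, Matrix.mul_add, Matrix.mul_vecMulVec, Matrix.mul_vecMulVec]
  have comm : ∀ A : Matrix n n ℂ, Aᴴ = A → W *ᵥ (A *ᵥ v) = A *ᵥ v →
      W *ᵥ (A *ᵥ w) = A *ᵥ w → W * A = A * W := by
    intro A hA h1 h2
    have e : W * A * W = A * W := by
      rw [mulW, mulW, ← Matrix.mulVec_mulVec, ← Matrix.mulVec_mulVec, h1, h2]
    have e' := congrArg Matrix.conjTranspose e
    simp only [Matrix.conjTranspose_mul, hWh, hA] at e'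
    rw [← e', ← Matrix.mul_assoc, e]
  have Wu : W *ᵥ u = u := by rw [huw, Matrix.mulVec_smul, Ww]
  have Fv : F *ᵥ v = u + α • v := by rw [hu]; abel
  have WFv : W *ᵥ (F *ᵥ v) = F *ᵥ v := by
    rw [Fv, Matrix.mulVec_add, Matrix.mulVec_smul, Wu, Wv]
  have WEv : W *ᵥ (E *ᵥ v) = E *ᵥ v := by rw [hEv, Matrix.mulVec_smul, Wv]
  have WFw : W *ᵥ (F *ᵥ w) = F *ᵥ w := by
    have : F *ᵥ w = r • (1 - α) • (F *ᵥ v) := by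
      rw [hw, Matrix.mulVec_smul, hu, Matrix.mulVec_sub, Matrix.mulVec_mulVec, hFF,
        Matrix.mulVec_smul]
      congr 1; module
    rw [this]; simp only [Matrix.mulVec_smul, WFv]
  have WEw : W *ᵥ (E *ᵥ w) = E *ᵥ w := by
    have : E *ᵥ w = r • ((b • v + c • (F *ᵥ v)) - α • a • v) := by
      rw [hw, Matrix.mulVec_smul, hu, Matrix.mulVec_sub, hEFv, Matrix.mulVec_smul, hEv]
    rw [this]; simp only [Matrix.mulVec_smul, Matrix.mulVec_sub, Matrix.mulVec_add, WFv, Wv]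
  refine ⟨?_, comm E hE WEv WEw, comm F hF WFv WFw, ?_⟩
  · rw [mulW, Wv, Ww]
  · have tr : ∀ x : n → ℂ, (vecMulVec x (star x) * ρ).trace = star x ⬝ᵥ (ρ *ᵥ x) := by
      intro x
      rw [Matrix.trace_mul_comm, Matrix.mul_vecMulVec, Matrix.trace_vecMulVec, dotProduct_comm]
    rw [hW, Matrix.add_mul, Matrix.trace_add, tr, tr, hvρ, Complex.add_re]
    have := hρ.re_dotProduct_nonneg w
    simp only [RCLike.re_eq_complex_re] at this
    linarith

/-! ### Assemblages and their quantum realizations -/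

/-- Alice's two dichotomic measurements `E x` on a system with state `ρ`, together with an
assemblage `σ y b`: the unnormalised states into which the outcome `b` of Bob's setting `y` steers
that system. Bob's own Hilbert space does not appear. -/
structure Steer {n : Type*} [Fintype n] [DecidableEq n] {ny nb : ℕ} (E : Fin 2 → Matrix n n ℂ)
    (ρ : Matrix n n ℂ) (σ : Fin ny → Fin nb → Matrix n n ℂ) : Prop where
  eff : ∀ x, Eff (E x)
  psd : ρ.PosSemidef
  tr : ρ.trace = 1
  pos : ∀ y b, (σ y b).PosSemidef
  sum : ∀ y, ∑ b, σ y b = ρ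

/-- The two effects of the dichotomic measurement whose outcome `0` has effect `E`. -/
def out {n : Type*} [Fintype n] [DecidableEq n] (E : Matrix n n ℂ) (a : Fin 2) : Matrix n n ℂ :=
  if a = 0 then E else 1 - E

/-- The correlation obtained from Alice's effects and the assemblage prepared by Bob. -/
def corr {n : Type*} [Fintype n] [DecidableEq n] {ny nb : ℕ} (E : Fin 2 → Matrix n n ℂ)
    (σ : Fin ny → Fin nb → Matrix n n ℂ) : Fin 2 → Fin ny → Fin 2 → Fin nb → ℝ :=
  fun x y a b => (out (E x) a * σ y b).trace.re

lemma exists_psd_sqrt {n : Type*} [Fintype n] [DecidableEq n] {A : Matrix n n ℂ}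
    (hA : A.PosSemidef) : ∃ C : Matrix n n ℂ, Cᴴ = C ∧ C * C = A := by
  obtain ⟨U, hU, -, hA'⟩ := exists_diagonalization hA.1
  refine ⟨specMat U (fun i => Real.sqrt (hA.1.eigenvalues i)), specMat_hermitian _, ?_⟩
  rw [specMat_mul hU]
  conv_rhs => rw [hA']
  change _ = specMat U _
  congr 1; ext i
  exact Real.mul_self_sqrt (hA.eigenvalues_nonneg i)

lemma trace_mul_eq_re {n : Type*} [Fintype n] {A B : Matrix n n ℂ}
    (hA : Aᴴ = A) (hB : Bᴴ = B) : (A * B).trace = ((A * B).trace.re : ℂ) := by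
  have h : star (A * B).trace = (A * B).trace := by
    rw [← Matrix.trace_conjTranspose, Matrix.conjTranspose_mul, hA, hB, Matrix.trace_mul_comm]
  exact (Complex.conj_eq_iff_re.1 h).symm

/-- If positive semidefinite matrices sum to `ρ`, their supports lie in the support of `ρ`. -/
lemma mul_eq_zero_of_sum {n ι : Type*} [Fintype n] [DecidableEq n] [Fintype ι]
    {σ : ι → Matrix n n ℂ} (hσ : ∀ b, (σ b).PosSemidef) {B : Matrix n n ℂ}
    (hB : (∑ b, σ b) * B = 0) (b : ι) : σ b * B = 0 := by
  have h1 : ∀ b, 0 ≤ (Bᴴ * σ b * B).trace :=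
    fun b => ((hσ b).conjTranspose_mul_mul_same B).trace_nonneg
  have h2 : ∑ b, (Bᴴ * σ b * B).trace = 0 := by
    rw [← Matrix.trace_sum, ← Finset.sum_mul, ← Finset.mul_sum, Matrix.mul_assoc, hB]
    simp
  have h3 := (Finset.sum_eq_zero_iff_of_nonneg fun b _ => h1 b).1 h2 b (Finset.mem_univ b)
  have h4 := ((hσ b).conjTranspose_mul_mul_same B).trace_eq_zero_iff.1 h3
  obtain ⟨C, hC, hCC⟩ := exists_psd_sqrt (hσ b)
  have h5 : (C * B)ᴴ * (C * B) = 0 := by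
    rw [Matrix.conjTranspose_mul, hC, ← h4, ← hCC]
    simp only [Matrix.mul_assoc]
  rw [Matrix.conjTranspose_mul_self_eq_zero] at h5
  rw [← hCC, Matrix.mul_assoc, h5, Matrix.mul_zero]

/-- A vector of `ℂ^d ⊗ ℂ^d` is viewed as the matrix `S` of its coefficients; the product observable
`M ⊗ N` then has expectation `Tr (M S Nᵀ Sᴴ)`. -/
lemma trace_pure_kronecker {d : ℕ} (S M N : Matrix (Fin d) (Fin d) ℂ) :
    (Matrix.vecMulVec (fun p : Fin d × Fin d => S p.1 p.2)
      (star (fun p : Fin d × Fin d => S p.1 p.2)) * (M ⊗ₖ N)).trace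
      = (M * (S * Nᵀ * Sᴴ)).trace := by
  rw [Matrix.trace_mul_comm, Matrix.mul_vecMulVec, Matrix.trace_vecMulVec]
  have : (M ⊗ₖ N).mulVec (fun p : Fin d × Fin d => S p.1 p.2)
      = fun p => (M * S * Nᵀ) p.1 p.2 := by
    ext p
    simp only [Matrix.mulVec, dotProduct, Matrix.kroneckerMap_apply, Fintype.sum_prod_type,
      Matrix.mul_apply, Matrix.transpose_apply, Finset.sum_mul]
    rw [Finset.sum_comm]
    refine Finset.sum_congr rfl fun _ _ => Finset.sum_congr rfl fun _ _ => ?_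
    ring
  rw [this]
  rw [← Matrix.mul_assoc, ← Matrix.mul_assoc]
  simp [dotProduct, Matrix.trace, Matrix.mul_apply (N := Sᴴ), Fintype.sum_prod_type]

lemma out_isPOVM {n : Type*} [Fintype n] [DecidableEq n] {E : Matrix n n ℂ} (hE : Eff E) :
    IsPOVM (out E) := by
  constructor
  · intro a
    unfold out
    split_ifs
    exacts [hE.1, hE.2]
  · simp [out, Fin.sum_univ_two]

/-- Every assemblage arises from measurements on a purification of `ρ` whose purifying system has
the same dimension (Gisin, Hughston–Jozsa–Wootters). -/
lemma Steer.realizesBiPure {d ny nb : ℕ} {E : Fin 2 → Matrix (Fin d) (Fin d) ℂ}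
    {ρ : Matrix (Fin d) (Fin d) ℂ} {σ : Fin ny → Fin nb → Matrix (Fin d) (Fin d) ℂ}
    (h : Steer E ρ σ) : RealizesBiPure 2 ny 2 nb d d (corr E σ) := by
  obtain ⟨U, hU, hU', hρ⟩ := exists_diagonalization h.psd.1
  have l0 := h.psd.eigenvalues_nonneg
  set l := h.psd.1.eigenvalues
  have hρ' : ρ = specMat U l := hρ
  set S := specMat U (fun i => Real.sqrt (l i)) with hS
  -- zero eigenvalues are inverted to zero, which makes `R` a pseudo-inverse of `S`
  set R := specMat U (fun i => (Real.sqrt (l i))⁻¹) with hR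
  set Q := specMat U (fun i => if l i = 0 then 0 else 1) with hQ
  have hs : ∀ i, l i ≠ 0 → Real.sqrt (l i) ≠ 0 := fun i hi =>
    (Real.sqrt_pos.2 (lt_of_le_of_ne (l0 i) (Ne.symm hi))).ne'
  have hSS : S * S = ρ := by
    rw [hS, specMat_mul hU, hρ']
    congr 1; ext i; exact Real.mul_self_sqrt (l0 i)
  have hSR : S * R = Q := by
    rw [hS, hR, hQ, specMat_mul hU]
    congr 1; ext i
    split_ifs with hi
    · simp [hi]
    · exact mul_inv_cancel₀ (hs i hi)
  have hRS : R * S = Q := by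
    rw [hS, hR, hQ, specMat_mul hU]
    congr 1; ext i
    split_ifs with hi
    · simp [hi]
    · exact inv_mul_cancel₀ (hs i hi)
  have hSQ : S * Q = S := by
    rw [hS, hQ, specMat_mul hU]
    congr 1; ext i
    split_ifs with hi <;> simp [hi]
  have hQQ : Q * Q = Q := by
    rw [hQ, specMat_mul hU]
    congr 1; ext i
    split_ifs with hi <;> simp
  have hρQ : ρ * (1 - Q) = 0 := by
    rw [Matrix.mul_sub, Matrix.mul_one, ← hSS, Matrix.mul_assoc, hSQ, sub_self]
  have hQh : Qᴴ = Q := specMat_hermitian _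
  have hSh : Sᴴ = S := specMat_hermitian _
  have hRh : Rᴴ = R := specMat_hermitian _
  have hQe : Eff Q := specMat_eff hU' (fun i => by split_ifs <;> norm_num)
    (fun i => by split_ifs <;> norm_num)
  have hσQ : ∀ y b, σ y b * Q = σ y b := by
    intro y b
    have := mul_eq_zero_of_sum (h.pos y) (B := 1 - Q) (by rw [h.sum, hρQ]) b
    rw [Matrix.mul_sub, Matrix.mul_one, sub_eq_zero] at this
    exact this.symm
  have hQσ : ∀ y b, Q * σ y b = σ y b := by
    intro y b
    have := congrArg Matrix.conjTranspose (hσQ y b)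
    rwa [Matrix.conjTranspose_mul, hQh, (h.pos y b).1.eq] at this
  refine ⟨fun p => S p.1 p.2, ?_, fun x => out (E x),
    fun y b => (R * σ y b * R + (nb : ℂ)⁻¹ • (1 - Q))ᵀ, fun x => out_isPOVM (h.eff x), ?_, ?_⟩
  · have h2 : (S * Sᴴ).trace = ((∑ p : Fin d × Fin d, Complex.normSq (S p.1 p.2) : ℝ) : ℂ) := by
      simp [Matrix.trace, Matrix.mul_apply, Fintype.sum_prod_type, Complex.mul_conj]
    rw [hSh, hSS, h.tr] at h2
    exact_mod_cast h2.symm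
  · intro y
    -- without outcomes for the setting `y`, `ρ` would be an empty sum and have trace `0`
    have hnb : (nb : ℂ) ≠ 0 := by
      intro h0
      have h0' : nb = 0 := by exact_mod_cast h0
      subst h0'
      have := h.sum y
      have htr := h.tr
      rw [← this] at htr
      simp at htr
    constructor
    · intro b
      apply Matrix.PosSemidef.transpose
      apply Matrix.PosSemidef.add
      · have := (h.pos y b).mul_mul_conjTranspose_same R
        rwa [hRh] at this
      · apply hQe.2.smul
        rw [← Complex.ofReal_natCast, ← Complex.ofReal_inv]
        exact_mod_cast inv_nonneg.2 (Nat.cast_nonneg nb)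
    · rw [← Matrix.transpose_sum, Finset.sum_add_distrib, ← Finset.sum_mul, ← Finset.mul_sum,
        h.sum y, ← hSS]
      have : R * (S * S) * R = Q := by
        rw [← Matrix.mul_assoc R, hRS, Matrix.mul_assoc, hSR, hQQ]
      rw [this, Finset.sum_const, Finset.card_univ, Fintype.card_fin, ← Nat.cast_smul_eq_nsmul ℂ,
        smul_smul, mul_inv_cancel₀ hnb, one_smul, add_sub_cancel, Matrix.transpose_one]
  · intro x y a b
    rw [trace_pure_kronecker, Matrix.transpose_transpose, hSh]
    have e : S * (R * σ y b * R + (nb : ℂ)⁻¹ • (1 - Q)) * S = σ y b := by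
      have e1 : S * (R * σ y b * R) * S = (S * R) * σ y b * (R * S) := by
        simp only [Matrix.mul_assoc]
      have e2 : S * (1 - Q) = 0 := by rw [Matrix.mul_sub, hSQ, Matrix.mul_one, sub_self]
      rw [Matrix.mul_add, Matrix.add_mul, e1, hSR, hRS, hQσ, hσQ, Matrix.mul_smul, e2]
      simp
    rw [e]
    exact (trace_mul_eq_re ((out_isPOVM (h.eff x)).1 a).1 (h.pos y b).1).symm

lemma RealizesBiPure.mem {ny nb dA dB : ℕ} {P : Fin 2 → Fin ny → Fin 2 → Fin nb → ℝ}
    (h : RealizesBiPure 2 ny 2 nb dA dB P) : P ∈ QuantumSetBi 2 ny 2 nb := by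
  obtain ⟨ψ, hψ, M, N, hM, hN, hP⟩ := h
  refine ⟨dA, dB, Matrix.vecMulVec ψ (star ψ), ⟨Matrix.posSemidef_vecMulVec_self_star ψ, ?_⟩,
    M, N, hM, hN, hP⟩
  rw [Matrix.trace_vecMulVec]
  have : ψ ⬝ᵥ star ψ = ((∑ p, Complex.normSq (ψ p) : ℝ) : ℂ) := by
    simp [dotProduct, Complex.mul_conj]
  rw [this, hψ, Complex.ofReal_one]

/-- The partial trace over the second tensor factor. -/
def ptr {m k : Type*} [Fintype k] (X : Matrix (m × k) (m × k) ℂ) : Matrix m m ℂ :=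
  ∑ j, X.submatrix (fun i => (i, j)) (fun i => (i, j))

lemma ptr_posSemidef {m k : Type*} [Fintype k] {X : Matrix (m × k) (m × k) ℂ}
    (hX : X.PosSemidef) : (ptr X).PosSemidef :=
  Matrix.posSemidef_sum _ fun _ _ => hX.submatrix _

lemma ptr_trace_mul {m k : Type*} [Fintype m] [Fintype k] [DecidableEq m] [DecidableEq k]
    (M : Matrix m m ℂ) (X : Matrix (m × k) (m × k) ℂ) :
    (M * ptr X).trace = ((M ⊗ₖ (1 : Matrix k k ℂ)) * X).trace := by
  simp only [ptr, Matrix.trace, Matrix.diag, Matrix.mul_apply, Matrix.sum_apply,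
    Matrix.submatrix_apply, Fintype.sum_prod_type, Matrix.kroneckerMap_apply, Matrix.one_apply,
    Finset.mul_sum]
  simp only [mul_ite, mul_one, mul_zero, ite_mul, zero_mul, Finset.sum_ite_eq, Finset.mem_univ,
    if_true]
  exact Finset.sum_congr rfl fun _ _ => Finset.sum_comm

lemma ptr_cyclic {m k : Type*} [Fintype m] [Fintype k] [DecidableEq m] [DecidableEq k]
    (C : Matrix k k ℂ) (X : Matrix (m × k) (m × k) ℂ) :
    ptr (((1 : Matrix m m ℂ) ⊗ₖ C) * X) = ptr (X * ((1 : Matrix m m ℂ) ⊗ₖ C)) := by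
  ext i j
  have e1 : ∀ p q, (((1 : Matrix m m ℂ) ⊗ₖ C) * X) (i, p) q = ∑ l, C p l * X (i, l) q := by
    intro p q
    rw [Matrix.mul_apply, Fintype.sum_prod_type, Finset.sum_eq_single i]
    · simp
    · intro b _ hb
      simp [Matrix.one_apply_ne hb.symm]
    · simp
  have e2 : ∀ p q, (X * ((1 : Matrix m m ℂ) ⊗ₖ C)) q (j, p) = ∑ l, X q (j, l) * C l p := by
    intro p q
    rw [Matrix.mul_apply, Fintype.sum_prod_type, Finset.sum_eq_single j]
    · simp
    · intro b _ hb
      simp [Matrix.one_apply_ne hb]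
    · simp
  simp only [ptr, Matrix.sum_apply, Matrix.submatrix_apply, e1, e2]
  rw [Finset.sum_comm]
  exact Finset.sum_congr rfl fun _ _ => Finset.sum_congr rfl fun _ _ => mul_comm _ _

/-- Bob's measurements on a shared state steer Alice's system into an assemblage. -/
lemma RealizesBi.exists_steer {ny nb dA dB : ℕ} {P : Fin 2 → Fin ny → Fin 2 → Fin nb → ℝ}
    (h : RealizesBi 2 ny 2 nb dA dB P) :
    ∃ (E : Fin 2 → Matrix (Fin dA) (Fin dA) ℂ) (ρ : Matrix (Fin dA) (Fin dA) ℂ)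
      (σ : Fin ny → Fin nb → Matrix (Fin dA) (Fin dA) ℂ), Steer E ρ σ ∧ P = corr E σ := by
  obtain ⟨r, ⟨hr, hr1⟩, M, N, hM, hN, hP⟩ := h
  have hM1 : ∀ x, M x 1 = 1 - M x 0 := by
    intro x
    have := (hM x).2
    rw [Fin.sum_univ_two] at this
    exact eq_sub_of_add_eq' this
  have hout : ∀ x a, out (M x 0) a = M x a := by
    intro x a
    fin_cases a
    · simp [out]
    · simp [out, hM1]
  refine ⟨fun x => M x 0, ptr r, fun y b => ptr (r * ((1 : Matrix (Fin dA) (Fin dA) ℂ) ⊗ₖ N y b)),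
    ⟨fun x => ⟨(hM x).1 0, hM1 x ▸ (hM x).1 1⟩, ptr_posSemidef hr, ?_, ?_, ?_⟩, ?_⟩
  · have := ptr_trace_mul 1 r
    simpa [hr1] using this
  · intro y b
    obtain ⟨C, hC, hCC⟩ := exists_psd_sqrt ((hN y).1 b)
    have e : ptr (r * ((1 : Matrix (Fin dA) (Fin dA) ℂ) ⊗ₖ N y b))
        = ptr (((1 : Matrix (Fin dA) (Fin dA) ℂ) ⊗ₖ C) * r
          * ((1 : Matrix (Fin dA) (Fin dA) ℂ) ⊗ₖ C)ᴴ) := by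
      rw [Matrix.mul_assoc, ptr_cyclic, Matrix.conjTranspose_kronecker, hC, Matrix.mul_assoc,
        ← Matrix.mul_kronecker_mul, hCC]
      simp
    rw [e]
    exact ptr_posSemidef (hr.mul_mul_conjTranspose_same _)
  · intro y
    have lin : ∀ s : Finset (Fin nb),
        ∑ b ∈ s, ptr (r * ((1 : Matrix (Fin dA) (Fin dA) ℂ) ⊗ₖ N y b))
        = ptr (r * ((1 : Matrix (Fin dA) (Fin dA) ℂ) ⊗ₖ ∑ b ∈ s, N y b)) := by
      intro s
      induction s using Finset.induction_on with
      | empty => simp [ptr]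
      | insert b s hb ih =>
        rw [Finset.sum_insert hb, Finset.sum_insert hb, ih, Matrix.kronecker_add, Matrix.mul_add]
        simp only [ptr, Matrix.submatrix_add, Pi.add_apply, Finset.sum_add_distrib]
    rw [lin, (hN y).2, Matrix.one_kronecker_one, Matrix.mul_one]
  · ext x y a b
    have := hP x y a b
    simp only [corr]
    rw [hout, ptr_trace_mul, Matrix.trace_mul_comm, Matrix.mul_assoc,
      ← Matrix.mul_kronecker_mul, Matrix.one_mul, Matrix.mul_one, ← this, Complex.ofReal_re]

/-! ### Reduction of extremal correlations -/

lemma eq_of_mixture {ny nb : ℕ} {P P₁ P₂ : Fin 2 → Fin ny → Fin 2 → Fin nb → ℝ}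
    (hP : P ∈ Set.extremePoints ℝ (QuantumSetBi 2 ny 2 nb))
    (h₁ : P₁ ∈ QuantumSetBi 2 ny 2 nb) (h₂ : P₂ ∈ QuantumSetBi 2 ny 2 nb) {c : ℝ}
    (hc0 : 0 < c) (hc1 : c < 1)
    (h : ∀ x y a b, P x y a b = c * P₁ x y a b + (1 - c) * P₂ x y a b) : P = P₁ := by
  refine (hP.2 h₁ h₂ ⟨c, 1 - c, hc0, sub_pos.2 hc1, by ring, ?_⟩).symm
  ext x y a b
  simp [h]

lemma trace_mul_smul_re {n : Type*} [Fintype n] (T X : Matrix n n ℂ) (r : ℝ) :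
    (T * ((r : ℂ) • X)).trace.re = r * (T * X).trace.re := by
  simp

lemma trace_smul_mul_re {n : Type*} [Fintype n] (T X : Matrix n n ℂ) (r : ℝ) :
    ((r : ℂ) • T * X).trace.re = r * (T * X).trace.re := by
  simp

/-- An extremal correlation is unchanged when one of Alice's effects is replaced by a suitable
projection. -/
lemma exists_projective {n ny nb : ℕ} {E : Fin 2 → Matrix (Fin n) (Fin n) ℂ}
    {ρ : Matrix (Fin n) (Fin n) ℂ} {σ : Fin ny → Fin nb → Matrix (Fin n) (Fin n) ℂ}
    (h : Steer E ρ σ) (hP : corr E σ ∈ Set.extremePoints ℝ (QuantumSetBi 2 ny 2 nb)) (x : Fin 2) :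
    ∃ Q : Matrix (Fin n) (Fin n) ℂ, Q * Q = Q ∧ Steer (Function.update E x Q) ρ σ ∧
      corr E σ = corr (Function.update E x Q) σ := by
  obtain ⟨c, Q, F, hc0, hc1, hQ, hQQ, hF, hE⟩ := (h.eff x).exists_mixture
  have upd : ∀ {G}, Eff G → Steer (Function.update E x G) ρ σ := by
    intro G hG
    refine ⟨fun x' => ?_, h.psd, h.tr, h.pos, h.sum⟩
    by_cases hx : x' = x
    · subst hx; simpa using hG
    · simpa [hx] using h.eff x'
  refine ⟨Q, hQQ, upd hQ, eq_of_mixture hP (upd hQ).realizesBiPure.mem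
    (upd hF).realizesBiPure.mem hc0 hc1 ?_⟩
  intro x' y a b
  by_cases hx : x' = x
  · subst hx
    have e : out (E x') a = (c : ℂ) • out Q a + ((1 - c : ℝ) : ℂ) • out F a := by
      unfold out
      split_ifs
      · exact hE
      · rw [hE]; push_cast; module
    simp only [corr, Function.update_self]
    rw [e, Matrix.add_mul, Matrix.trace_add, Complex.add_re, trace_smul_mul_re,
      trace_smul_mul_re]
  · simp only [corr, Function.update_of_ne hx]
    ring

/-- Compressing the system along `J` gives an assemblage on the smaller space whose correlation is
that of the filtered assemblage `J Jᴴ σ J Jᴴ`, normalised. -/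
lemma Steer.compress {n m : Type*} [Fintype n] [DecidableEq n] [Fintype m] [DecidableEq m]
    {ny nb : ℕ} {E : Fin 2 → Matrix n n ℂ}
    {ρ : Matrix n n ℂ} {σ : Fin ny → Fin nb → Matrix n n ℂ}
    (h : Steer E ρ σ) (J : Matrix n m ℂ) (hW : (J * Jᴴ) * (J * Jᴴ) = J * Jᴴ)
    {q : ℝ} (hq : 0 < q) (hqρ : ((J * Jᴴ) * ρ).trace = (q : ℂ)) :
    Steer (fun x => Jᴴ * E x * J) (((q⁻¹ : ℝ) : ℂ) • (Jᴴ * ρ * J))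
        (fun y b => ((q⁻¹ : ℝ) : ℂ) • (Jᴴ * σ y b * J)) ∧
      ∀ x y a b, corr (fun x => Jᴴ * E x * J)
        (fun y b => ((q⁻¹ : ℝ) : ℂ) • (Jᴴ * σ y b * J)) x y a b
        = q⁻¹ * (out (E x) a * ((J * Jᴴ) * σ y b * (J * Jᴴ))).trace.re := by
  have hq' : (0 : ℂ) ≤ ((q⁻¹ : ℝ) : ℂ) := by exact_mod_cast (inv_pos.2 hq).le
  -- `J` is a partial isometry, so `Jᴴ J` is a projection and `1 - Jᴴ J` is positive
  have hJ : J * Jᴴ * J = J := by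
    have h0 : (J * Jᴴ * J - J) * (J * Jᴴ * J - J)ᴴ = 0 := by
      have e : (J * Jᴴ * J - J) * (J * Jᴴ * J - J)ᴴ
          = (J * Jᴴ) * (J * Jᴴ) * (J * Jᴴ) - (J * Jᴴ) * (J * Jᴴ) - (J * Jᴴ) * (J * Jᴴ)
            + J * Jᴴ := by
        simp only [Matrix.conjTranspose_sub, Matrix.conjTranspose_mul,
          Matrix.conjTranspose_conjTranspose, Matrix.mul_sub, Matrix.sub_mul, Matrix.mul_assoc]
        abel
      rw [e, hW, hW]; abel
    rw [Matrix.self_mul_conjTranspose_eq_zero, sub_eq_zero] at h0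
    exact h0
  have hproj : (1 - Jᴴ * J).PosSemidef := by
    have e : (1 - Jᴴ * J) = (1 - Jᴴ * J)ᴴ * (1 - Jᴴ * J) := by
      simp only [Matrix.conjTranspose_sub, Matrix.conjTranspose_mul, Matrix.conjTranspose_one,
          Matrix.conjTranspose_conjTranspose, Matrix.mul_sub, Matrix.sub_mul, Matrix.one_mul,
          Matrix.mul_one]
      rw [Matrix.mul_assoc Jᴴ, ← Matrix.mul_assoc J, hJ]
      abel
    rw [e]
    exact Matrix.posSemidef_conjTranspose_mul_self _
  refine ⟨⟨fun x => ⟨(h.eff x).1.conjTranspose_mul_mul_same J, ?_⟩,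
    (h.psd.conjTranspose_mul_mul_same J).smul hq', ?_,
    fun y b => ((h.pos y b).conjTranspose_mul_mul_same J).smul hq', ?_⟩, ?_⟩
  · have e : 1 - Jᴴ * E x * J = (1 - Jᴴ * J) + Jᴴ * (1 - E x) * J := by
      rw [Matrix.mul_sub, Matrix.sub_mul, Matrix.mul_one]; abel
    rw [e]
    exact hproj.add ((h.eff x).2.conjTranspose_mul_mul_same J)
  · rw [Matrix.trace_smul, Matrix.trace_mul_comm, ← Matrix.mul_assoc, hqρ, smul_eq_mul,
      ← Complex.ofReal_mul, inv_mul_cancel₀ hq.ne', Complex.ofReal_one]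
  · intro y
    rw [← Finset.smul_sum, ← Matrix.sum_mul, ← Matrix.mul_sum, h.sum]
  · intro x y a b
    simp only [corr]
    rw [trace_mul_smul_re]
    congr 2
    have t : ∀ T : Matrix n n ℂ, (Jᴴ * T * J * (Jᴴ * σ y b * J)).trace
        = (T * ((J * Jᴴ) * σ y b * (J * Jᴴ))).trace := by
      intro T
      have e : Jᴴ * T * J * (Jᴴ * σ y b * J) = Jᴴ * (T * ((J * Jᴴ) * σ y b * J)) := by
        simp only [Matrix.mul_assoc]
      rw [e, Matrix.trace_mul_comm]
      simp only [Matrix.mul_assoc]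
    unfold out
    split_ifs
    · exact t _
    · have t1 : (Jᴴ * σ y b * J).trace = ((J * Jᴴ) * σ y b * (J * Jᴴ)).trace := by
        rw [Matrix.trace_mul_comm, Matrix.trace_mul_comm (J * Jᴴ * σ y b), ← Matrix.mul_assoc,
          ← Matrix.mul_assoc (J * Jᴴ), hW]
      rw [Matrix.sub_mul, Matrix.sub_mul, Matrix.one_mul, Matrix.one_mul, Matrix.trace_sub,
        Matrix.trace_sub, t, t1]

theorem extremal_bipartite_realizable_with_two_qubits (ny nb : ℕ)
    (P : Fin 2 → Fin ny → Fin 2 → Fin nb → ℝ)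
    (hP : P ∈ Set.extremePoints ℝ (QuantumSetBi 2 ny 2 nb)) :
    RealizesBiPure 2 ny 2 nb 2 2 P := by
  obtain ⟨d, dB, hr⟩ := hP.1
  obtain ⟨E₀, ρ, σ, h₀, rfl⟩ := hr.exists_steer
  obtain ⟨Q₀, hQ₀, h₁, e₁⟩ := exists_projective h₀ hP 0
  rw [e₁] at hP ⊢
  obtain ⟨Q₁, hQ₁, h, e₂⟩ := exists_projective h₁ hP 1
  rw [e₂] at hP ⊢
  set E := Function.update (Function.update E₀ 0 Q₀) 1 Q₁ with hE
  have hE0 : E 0 = Q₀ := by simp [hE]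
  have hE1 : E 1 = Q₁ := by simp [hE]
  obtain ⟨J, hW, c0, c1, hpos⟩ := exists_jordan_block (h.eff 0).1.1 (h.eff 1).1.1
    (by rw [hE0, hQ₀]) (by rw [hE1, hQ₁]) h.psd h.tr
  have hWh : (J * Jᴴ)ᴴ = J * Jᴴ := by simp
  set q := (J * Jᴴ * ρ).trace.re with hq
  have hqρ : (J * Jᴴ * ρ).trace = (q : ℂ) := trace_mul_eq_re hWh h.psd.1
  obtain ⟨hc, hcorr⟩ := h.compress J hW hpos hqρ
  set W := J * Jᴴ
  have comm : ∀ x a, W * out (E x) a = out (E x) a * W := by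
    intro x a
    have : W * E x = E x * W := by
      fin_cases x
      exacts [c0, c1]
    unfold out
    split_ifs
    · exact this
    · rw [Matrix.mul_sub, Matrix.sub_mul, this, Matrix.mul_one, Matrix.one_mul]
  have hV : (1 - W) * (1 - W) = 1 - W := by simp [Matrix.mul_sub, Matrix.sub_mul, hW]
  have hVh : (1 - W)ᴴ = 1 - W := by simp [hWh]
  have trW : ((1 - W) * ρ * (1 - W)).trace = ((1 - q : ℝ) : ℂ) := by
    rw [Matrix.trace_mul_comm, ← Matrix.mul_assoc, hV, Matrix.sub_mul, Matrix.trace_sub, hqρ,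
      Matrix.one_mul, h.tr]
    simp
  have trW' : (W * ρ * W).trace = (q : ℂ) := by
    rw [Matrix.trace_mul_comm, ← Matrix.mul_assoc, hW, hqρ]
  have posW : ∀ {A : Matrix (Fin d) (Fin d) ℂ}, A.PosSemidef → (W * A * W).PosSemidef := by
    intro A hA
    have := hA.mul_mul_conjTranspose_same W
    rwa [hWh] at this
  have posV : ∀ {A : Matrix (Fin d) (Fin d) ℂ}, A.PosSemidef →
      ((1 - W) * A * (1 - W)).PosSemidef := by
    intro A hA
    have := hA.mul_mul_conjTranspose_same (1 - W)
    rwa [hVh] at this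
  have hq1 : q ≤ 1 := by
    have := (posV h.psd).trace_nonneg
    rw [trW] at this
    have : (0 : ℝ) ≤ 1 - q := by exact_mod_cast this
    linarith
  have hr0 : 0 < 1 - q / 2 := by linarith
  have hr2 : 2 - q ≠ 0 := by
    have : 0 < 2 - q := by linarith
    exact this.ne'
  have hr' : (0 : ℂ) ≤ (((1 - q / 2)⁻¹ : ℝ) : ℂ) := by exact_mod_cast (inv_pos.2 hr0).le
  have half : (0 : ℂ) ≤ ((1 / 2 : ℝ) : ℂ) := by
    exact_mod_cast (by norm_num : (0 : ℝ) ≤ 1 / 2)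
  -- Only half of the weight `q` of the block is split off, so that the remaining weight
  -- `1 - q / 2` is positive even when `q = 1`.
  let rest : Matrix (Fin d) (Fin d) ℂ → Matrix (Fin d) (Fin d) ℂ := fun A =>
    (((1 - q / 2)⁻¹ : ℝ) : ℂ) • (((1 / 2 : ℝ) : ℂ) • (W * A * W) + (1 - W) * A * (1 - W))
  have rest_pos : ∀ {A : Matrix (Fin d) (Fin d) ℂ}, A.PosSemidef → (rest A).PosSemidef :=
    fun hA => (((posW hA).smul half).add (posV hA)).smul hr'
  have h2 : Steer E (rest ρ) (fun y b => rest (σ y b)) := by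
    refine ⟨h.eff, rest_pos h.psd, ?_, fun y b => rest_pos (h.pos y b), fun y => ?_⟩
    · simp only [rest]
      rw [Matrix.trace_smul, Matrix.trace_add, Matrix.trace_smul, trW, trW']
      simp only [smul_eq_mul]
      norm_cast
      rw [show 1 - q / 2 = (2 - q) / 2 by ring]
      field_simp
      ring
    · simp only [rest]
      rw [← Finset.smul_sum, Finset.sum_add_distrib, ← Finset.smul_sum, ← Finset.sum_mul,
        ← Finset.mul_sum, ← Finset.sum_mul, ← Finset.mul_sum, h.sum]
  have hfin := eq_of_mixture hP hc.realizesBiPure.mem h2.realizesBiPure.mem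
    (c := q / 2) (by linarith) (by linarith) (fun x y a b => by
      rw [hcorr]
      simp only [corr, rest]
      rw [trace_mul_smul_re, Matrix.mul_add, Matrix.trace_add, Complex.add_re, trace_mul_smul_re]
      have split : (out (E x) a * σ y b).trace = (out (E x) a * (W * σ y b * W)).trace
          + (out (E x) a * ((1 - W) * σ y b * (1 - W))).trace := by
        have key : ∀ V : Matrix (Fin d) (Fin d) ℂ, V * V = V →
            V * out (E x) a = out (E x) a * V →
            (out (E x) a * (V * σ y b * V)).trace = (out (E x) a * V * σ y b).trace := by
          intro V hVV hVT
          rw [← Matrix.mul_assoc, Matrix.trace_mul_comm, ← Matrix.mul_assoc, ← Matrix.mul_assoc,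
            hVT, Matrix.mul_assoc (out (E x) a), hVV]
        rw [key W hW (comm x a), key (1 - W) hV (by
          rw [Matrix.mul_sub, Matrix.sub_mul, comm, Matrix.mul_one, Matrix.one_mul]),
          ← Matrix.trace_add, ← Matrix.add_mul, ← Matrix.mul_add, add_sub_cancel, Matrix.mul_one]
      rw [split, Complex.add_re]
      have hq0 : q ≠ 0 := hpos.ne'
      rw [← mul_assoc (1 - q / 2), mul_inv_cancel₀ hr0.ne', ← mul_assoc (q / 2),
        div_mul_eq_mul_div, mul_inv_cancel₀ hq0]
      ring)
  rw [hfin]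
  exact hc.realizesBiPure
end
end

section
/- Fix a Bell scenario, let Q_{∞} denote the set of all quantum correlations of the scenario (no bound on local Hilbert space dimensions), and let Q_{d⃗} denote the set of quantum correlations realizable with finite local dimensions d⃗ = (d₁,...,d_N). Suppose Q_{∞} equals the convex hull of Q_{d⃗}, and let c := CathNum(Q_{d⃗}) be the Carathéodory number of Q_{d⃗} (the least k such that every point of the convex hull of Q_{d⃗} is a convex combination of at most k points of Q_{d⃗}). Then Q_{∞} = Q_{c·d⃗}, i.e. every quantum correlation of the scenario is realizable with each party's local Hilbert space dimension at most c·d_i. -/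
/-! Write a given quantum correlation as a convex combination `∑ j, w j * p j` of `c` correlations,
the `j`-th realized by a state `ρ j` and measurements `M j` in local dimensions `d`. Give each party
the local space `⊕ j, ℂ^(d i) ≅ ℂ^(c * d i)`, with the block diagonal POVM `⊕ j, M j i`
(`isPOVM_blockPOVM`), and take the state `∑ j, w j • (E j * ρ j * (E j)ᴴ)`, where `E j` is the
isometry placing all parties in their `j`-th block. The block index is a classical label shared by
all parties: conjugating the tensor product of the block diagonal effects by `E j` gives back the
tensor product of the effects of the `j`-th strategy (`tensorN_submatrix_blockEmb`), so the new
behaviour is the given mixture (`realizes_mixture`). The opposite inclusion is immediate. -/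

/- STATEMENT 14: suppose the set `Q∞` of all quantum correlations of a Bell scenario
equals the convex hull of the set `Q_d` of correlations realizable with finite local
dimensions `d`, and let `c` be the Carathéodory number of `Q_d` (the least `k` such that
every point of the convex hull of `Q_d` is a convex combination of at most `k` points of
`Q_d`).  Then `Q∞ = Q_{c·d}`: every quantum correlation of the scenario is realizable with
local Hilbert space dimensions `c * d i`. -/

open scoped BigOperators Kronecker Matrix ComplexOrder

noncomputable section

/-- `N`-fold tensor (Kronecker) product of square matrices, realized as a matrix on the
product index set: `(⊗ᵢ Mᵢ) (r, c) = ∏ i, Mᵢ (r i) (c i)`. -/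
def tensorN {N : ℕ} (d : Fin N → ℕ) (M : ∀ i, Matrix (Fin (d i)) (Fin (d i)) ℂ) :
    Matrix (∀ i, Fin (d i)) (∀ i, Fin (d i)) ℂ :=
  Matrix.of fun r c => ∏ i, M i (r i) (c i)

/-- `Realizes x o d P`: the behaviour `P settings outcomes = P(a₁…a_N | x₁…x_N)` of the
`N`-partite Bell scenario in which party `i` has `x i` settings and `o i` outcomes is
realized by a density matrix and local POVMs, party `i` having local Hilbert space
dimension `d i`. -/
def Realizes {N : ℕ} (x o : Fin N → ℕ) (d : Fin N → ℕ)
    (P : (∀ i, Fin (x i)) → (∀ i, Fin (o i)) → ℝ) : Prop :=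
  ∃ ρ : Matrix (∀ i, Fin (d i)) (∀ i, Fin (d i)) ℂ,
    IsDensityMatrix ρ ∧
    ∃ M : ∀ i, Fin (x i) → Fin (o i) → Matrix (Fin (d i)) (Fin (d i)) ℂ,
      (∀ i xi, IsPOVM (M i xi)) ∧
      ∀ xs as, (P xs as : ℂ) = (ρ * tensorN d fun i => M i (xs i) (as i)).trace

/-- Realization by a pure state `ψ` (with `ρ = |ψ⟩⟨ψ|`) and local POVMs. -/
def RealizesPure {N : ℕ} (x o : Fin N → ℕ) (d : Fin N → ℕ)
    (P : (∀ i, Fin (x i)) → (∀ i, Fin (o i)) → ℝ) : Prop :=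
  ∃ ψ : (∀ i, Fin (d i)) → ℂ,
    (∑ p, Complex.normSq (ψ p)) = 1 ∧
    ∃ M : ∀ i, Fin (x i) → Fin (o i) → Matrix (Fin (d i)) (Fin (d i)) ℂ,
      (∀ i xi, IsPOVM (M i xi)) ∧
      ∀ xs as, (P xs as : ℂ) =
        (Matrix.vecMulVec ψ (star ψ) * tensorN d fun i => M i (xs i) (as i)).trace

/-- The set of all quantum correlations of the `N`-partite Bell scenario with `x i`
settings and `o i` outcomes for party `i`, with no restriction on the local Hilbert
space dimensions. -/
def QuantumSet {N : ℕ} (x o : Fin N → ℕ) :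
    Set ((∀ i, Fin (x i)) → (∀ i, Fin (o i)) → ℝ) :=
  {P | ∃ d, Realizes x o d P}

/-- The 0/1 matrix of the linear map sending the basis vector `e_r` to `e_(V r)`; it is an isometry
when `V` is injective. -/
def embMat {m n : Type*} [DecidableEq n] (V : m → n) : Matrix n m ℂ :=
  (1 : Matrix n n ℂ).submatrix id V

lemma embMat_conjTranspose_mul_mul {m n : Type*} [Fintype n] [DecidableEq n] (V : m → n)
    (T : Matrix n n ℂ) : (embMat V)ᴴ * T * embMat V = T.submatrix V V := by
  ext a b
  simp [embMat, Matrix.mul_apply, Matrix.one_apply]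

lemma trace_embMat_mul {m n : Type*} [Fintype m] [Fintype n] [DecidableEq n] (V : m → n)
    (ρ : Matrix m m ℂ) (T : Matrix n n ℂ) :
    (embMat V * ρ * (embMat V)ᴴ * T).trace = (ρ * T.submatrix V V).trace := by
  rw [← embMat_conjTranspose_mul_mul, Matrix.mul_assoc, Matrix.mul_assoc, Matrix.trace_mul_comm,
    Matrix.mul_assoc]

/-- A block diagonal matrix is the sum of its blocks, each conjugated by the inclusion of the
corresponding summand. -/
lemma posSemidef_blockDiagonal {m ι : Type*} [Fintype m] [Fintype ι] [DecidableEq m]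
    [DecidableEq ι] (M : ι → Matrix m m ℂ) (hM : ∀ k, (M k).PosSemidef) :
    (Matrix.blockDiagonal M).PosSemidef := by
  have h : Matrix.blockDiagonal M =
      ∑ k, embMat (fun a : m => (a, k)) * M k * (embMat (fun a : m => (a, k)))ᴴ := by
    ext ⟨a, k⟩ ⟨b, l⟩
    simp [embMat, Matrix.sum_apply, Matrix.mul_apply, Matrix.one_apply, Matrix.blockDiagonal_apply,
      Prod.ext_iff, ite_and]
    split_ifs with hkl <;> simp [*]
  rw [h]
  exact Matrix.posSemidef_sum _ fun k _ => (hM k).mul_mul_conjTranspose_same _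

/-- Identification of the basis of `⊕ (j : Fin c), ℂ^n` with `Fin (c * n)`; the second component is
the block index, as in `Matrix.blockDiagonal`. -/
def blockEquiv (c n : ℕ) : Fin n × Fin c ≃ Fin (c * n) :=
  (Equiv.prodComm _ _).trans finProdFinEquiv

/-- The direct sum of `c` families of `n × n` matrices, acting on `ℂ^(c * n)`. -/
def blockPOVM {c n : ℕ} {O : Type*} (M : Fin c → O → Matrix (Fin n) (Fin n) ℂ) (a : O) :
    Matrix (Fin (c * n)) (Fin (c * n)) ℂ :=
  (Matrix.blockDiagonal fun j => M j a).submatrix (blockEquiv c n).symm (blockEquiv c n).symm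

lemma isPOVM_blockPOVM {c n : ℕ} {O : Type*} [Fintype O]
    (M : Fin c → O → Matrix (Fin n) (Fin n) ℂ) (hM : ∀ j, IsPOVM (M j)) :
    IsPOVM (blockPOVM M) := by
  refine ⟨fun a => (posSemidef_blockDiagonal _ fun j => (hM j).1 a).submatrix _, ?_⟩
  have h : ∑ a, (Matrix.blockDiagonal fun j => M j a) = 1 := by
    rw [← Matrix.blockDiagonal_one]
    have h' := map_sum (Matrix.blockDiagonalAddMonoidHom (Fin n) (Fin n) (Fin c) ℂ)
      (fun a j => M j a) Finset.univ
    simp only [Matrix.blockDiagonalAddMonoidHom_apply] at h'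
    rw [← h']
    congr 1
    funext j
    simpa using (hM j).2
  have h2 : ∑ a, blockPOVM M a = (∑ a, (Matrix.blockDiagonal fun j => M j a)).submatrix
      (blockEquiv c n).symm (blockEquiv c n).symm := by
    ext p q
    simp [blockPOVM, Matrix.sum_apply]
  rw [h2, h, Matrix.submatrix_one_equiv]

/-- The map on product basis labels placing every party in its `j`-th block. -/
def blockEmb {N c : ℕ} (d : Fin N → ℕ) (j : Fin c) (r : ∀ i, Fin (d i)) :
    ∀ i, Fin (c * d i) :=
  fun i => blockEquiv c (d i) (r i, j)

lemma blockEmb_injective {N c : ℕ} (d : Fin N → ℕ) (j : Fin c) :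
    Function.Injective (blockEmb d j) := by
  intro r s h
  funext i
  have := (blockEquiv c (d i)).injective (congrFun h i)
  exact (Prod.ext_iff.1 this).1

/-- With all parties in block `j`, the direct-sum effects act as those of the `j`-th strategy. -/
lemma tensorN_submatrix_blockEmb {N c : ℕ} (d : Fin N → ℕ) {O : Fin N → Type*}
    (M : ∀ i, Fin c → O i → Matrix (Fin (d i)) (Fin (d i)) ℂ) (a : ∀ i, O i) (j : Fin c) :
    (tensorN (fun i => c * d i) fun i => blockPOVM (M i) (a i)).submatrix
      (blockEmb d j) (blockEmb d j) = tensorN d fun i => M i j (a i) := by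
  ext r s
  simp [tensorN, blockPOVM, blockEmb]

/-- A mixture of `c` behaviours realizable in local dimensions `d i` is realizable in local
dimensions `c * d i`. -/
lemma realizes_mixture {N c : ℕ} {x o d : Fin N → ℕ} (w : Fin c → ℝ)
    (p : Fin c → ((∀ i, Fin (x i)) → (∀ i, Fin (o i)) → ℝ))
    (hw : ∀ j, 0 ≤ w j) (hw1 : ∑ j, w j = 1) (hp : ∀ j, Realizes x o d (p j)) :
    Realizes x o (fun i => c * d i) fun xs as => ∑ j, w j * p j xs as := by
  choose ρ hρ M hM hP using hp
  have key : ∀ T : Matrix (∀ i, Fin (c * d i)) (∀ i, Fin (c * d i)) ℂ,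
      ((∑ j, (w j : ℂ) • (embMat (blockEmb d j) * ρ j * (embMat (blockEmb d j))ᴴ)) * T).trace =
      ∑ j, (w j : ℂ) * (ρ j * T.submatrix (blockEmb d j) (blockEmb d j)).trace := by
    intro T
    simp only [Finset.sum_mul, Matrix.trace_sum, Matrix.smul_mul, Matrix.trace_smul,
      trace_embMat_mul, smul_eq_mul]
  refine ⟨∑ j, (w j : ℂ) • (embMat (blockEmb d j) * ρ j * (embMat (blockEmb d j))ᴴ), ⟨?_, ?_⟩,
    fun i xi => blockPOVM fun j => M j i xi, fun i xi => isPOVM_blockPOVM _ fun j => hM j i xi, ?_⟩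
  · refine Matrix.posSemidef_sum _ fun j _ => Matrix.PosSemidef.smul
      ((hρ j).1.mul_mul_conjTranspose_same _) ?_
    exact_mod_cast hw j
  · have h := key 1
    rw [Matrix.mul_one] at h
    rw [h]
    simp only [Matrix.submatrix_one _ (blockEmb_injective d _), (hρ _).2, mul_one]
    exact_mod_cast hw1
  · intro xs as
    rw [key]
    push_cast
    refine Finset.sum_congr rfl fun j _ => ?_
    rw [hP, tensorN_submatrix_blockEmb d (fun i j => M j i (xs i)) as j]

theorem quantum_set_eq_bounded_dimension_set_of_caratheodory
    (N : ℕ) (x o d : Fin N → ℕ)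
    (hhull : QuantumSet x o = convexHull ℝ {P | Realizes x o d P})
    (c : ℕ)
    (hc : IsLeast {k : ℕ |
      ∀ q ∈ convexHull ℝ {P | Realizes x o d P},
        ∃ (w : Fin k → ℝ) (p : Fin k → ((∀ i, Fin (x i)) → (∀ i, Fin (o i)) → ℝ)),
          (∀ j, 0 ≤ w j) ∧ (∑ j, w j) = 1 ∧ (∀ j, Realizes x o d (p j)) ∧
          q = fun xs as => ∑ j, w j * p j xs as} c) :
    QuantumSet x o = {P | Realizes x o (fun i => c * d i) P} := by
  ext P
  constructor
  · intro hP
    rw [hhull] at hP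
    obtain ⟨w, p, hw, hw1, hp, rfl⟩ := hc.1 P hP
    exact realizes_mixture w p hw hw1 hp
  · intro hP
    exact ⟨_, hP⟩
end
end

section
/- Let f be a convex real-valued function on the space of instrumental-scenario conditional probability tables P(a,b|x), for the instrumental scenario in which Alice has two settings with two outcomes (and Bob arbitrary finite outcomes). Then the supremum of f over the set of ALL instrumental quantum correlations (no restriction on local Hilbert space dimensions) equals the supremum of f over instrumental quantum correlations generated by POVM measurements on a pure state with Alice's local Hilbert space dimension equal to 2 and Bob's local Hilbert space dimension equal to 2. -/
/-!
Every instrumental quantum table is a convex combination of tables of pure two-qubit realizations;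
a convex function then takes at a quantum table a value at most its value at some pure two-qubit
table (`ConvexOn.exists_ge_of_mem_convexHull`), so both images have the same upper bounds. As
`sSup` of a set without upper bound is `0`, the unbounded case also agrees.

For the convex decomposition, normalization is automatic: the functional `∑ a b, P 0 a b` equals
`1` on all quantum tables, so it suffices to work in the convex cone `twoQubitCone`.
A mixed state is a sum of unnormalized pure ones, and a bipartite vector written as a matrix `X`
gives the table `Tr[N_{b|a} X M_{a|x} Xᴴ]` (`trace_vecMulVec_kronecker`), with `M` transposed.

* Alice's side. A two-outcome POVM is an effect, hence a mixture of projections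
  (`IsEffect.mem_convexHull`). Two projections decompose the space orthogonally into jointly
  invariant subspaces of dimension at most two, so `1 = ∑ V Vᴴ` and `M x = ∑ V (Vᴴ M x V) Vᴴ` with
  matrices `V` having two columns (`jordan_proj`, `jordan_effect`), and the table splits into
  tables with `X` replaced by `X V`.
* Bob's side. The matrix `X V` has two columns, so its column space has dimension at most two,
  and Bob's POVMs are compressed to it (`exists_partialIsometry`, `table_qubit_mem`).
-/

/- STATEMENT 19: let `f` be a convex function on the space of instrumental-scenario
conditional probability tables `P(a,b|x)`, for the instrumental scenario in which Alice
has two settings with two outcomes (Bob having an arbitrary finite number `nb` of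
outcomes; Bob's setting is identified with Alice's outcome).  Then the supremum of `f`
over ALL instrumental quantum correlations (no restriction on local Hilbert space
dimensions) equals the supremum of `f` over instrumental quantum correlations generated
by POVM measurements on a pure state with both local Hilbert space dimensions equal
to 2. -/

open scoped BigOperators Kronecker Matrix ComplexOrder

noncomputable section

/-- `RealizesInstr nx na nb dA dB P`: the behaviour `P x a b = P(a,b|x)` of the
instrumental scenario (Alice: `nx` settings, `na` outcomes; Bob: `nb` outcomes, with
Bob's setting identified with Alice's outcome) is realized by a density matrix on
`ℂ^dA ⊗ ℂ^dB` and POVMs `{M_{a|x}}` on Alice's side and `{N_{b|y}}` (one POVM for each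
possible value `y` of Alice's outcome) on Bob's side. -/
def RealizesInstr (nx na nb dA dB : ℕ)
    (P : Fin nx → Fin na → Fin nb → ℝ) : Prop :=
  ∃ ρ : Matrix (Fin dA × Fin dB) (Fin dA × Fin dB) ℂ,
    IsDensityMatrix ρ ∧
    ∃ (M : Fin nx → Fin na → Matrix (Fin dA) (Fin dA) ℂ)
      (Nb : Fin na → Fin nb → Matrix (Fin dB) (Fin dB) ℂ),
      (∀ xi, IsPOVM (M xi)) ∧ (∀ yi, IsPOVM (Nb yi)) ∧
      ∀ xi ai bi, (P xi ai bi : ℂ) = (ρ * (M xi ai ⊗ₖ Nb ai bi)).trace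

/-- The set of all instrumental quantum correlations, with no restriction on the local
Hilbert space dimensions. -/
def InstrQuantumSet (nx na nb : ℕ) : Set (Fin nx → Fin na → Fin nb → ℝ) :=
  {P | ∃ dA dB, RealizesInstr nx na nb dA dB P}

/-- Realization of an instrumental behaviour by a pure state (`ρ = |ψ⟩⟨ψ|`) and POVMs,
with local Hilbert space dimensions `(dA, dB)`. -/
def RealizesInstrPure (nx na nb dA dB : ℕ)
    (P : Fin nx → Fin na → Fin nb → ℝ) : Prop :=
  ∃ ψ : Fin dA × Fin dB → ℂ,
    (∑ p, Complex.normSq (ψ p)) = 1 ∧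
    ∃ (M : Fin nx → Fin na → Matrix (Fin dA) (Fin dA) ℂ)
      (Nb : Fin na → Fin nb → Matrix (Fin dB) (Fin dB) ℂ),
      (∀ xi, IsPOVM (M xi)) ∧ (∀ yi, IsPOVM (Nb yi)) ∧
      ∀ xi ai bi, (P xi ai bi : ℂ) =
        (Matrix.vecMulVec ψ (star ψ) * (M xi ai ⊗ₖ Nb ai bi)).trace


/-! ### Positive matrices, partial isometries and effects -/

lemma PosSemidef.exists_spectral {n : Type*} [Fintype n] [DecidableEq n] {H : Matrix n n ℂ}
    (hH : H.PosSemidef) :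
    ∃ (U : Matrix n n ℂ) (d : n → ℝ), Uᴴ * U = 1 ∧ U * Uᴴ = 1 ∧ (∀ i, 0 ≤ d i) ∧
      H = U * Matrix.diagonal (fun i => (d i : ℂ)) * Uᴴ := by
  refine ⟨hH.1.eigenvectorUnitary, hH.1.eigenvalues, ?_, ?_, hH.eigenvalues_nonneg, ?_⟩
  · simpa [Matrix.star_eq_conjTranspose] using
      Unitary.coe_star_mul_self hH.1.eigenvectorUnitary
  · simpa [Matrix.star_eq_conjTranspose] using
      Unitary.coe_mul_star_self hH.1.eigenvectorUnitary
  · have := hH.1.spectral_theorem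
    simpa [Unitary.conjStarAlgAut_apply, Matrix.star_eq_conjTranspose, Function.comp_def] using this

/-- The column space of `Y` is the range of a partial isometry of the form `W = Y * B`.
With `Yᴴ * Y = U * diag d * Uᴴ`, one takes `B = U * diag (1 / √d)`; where `d i = 0` the junk
value `(√0)⁻¹ = 0` is exactly what makes `W` a partial isometry. -/
lemma exists_partialIsometry {m k : Type*} [Fintype m] [Fintype k] [DecidableEq k]
    (Y : Matrix m k ℂ) :
    ∃ B : Matrix k k ℂ, (Y * B) * (Y * B)ᴴ * (Y * B) = Y * B ∧
      (Y * B) * (Y * B)ᴴ * Y = Y := by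
  obtain ⟨U, d, hU, hU', hd, hH⟩ :=
    PosSemidef.exists_spectral (Matrix.posSemidef_conjTranspose_mul_self Y)
  set s : k → ℂ := fun i => (((√(d i))⁻¹ : ℝ) : ℂ) with hs
  set D := Matrix.diagonal (fun i => (d i : ℂ)) with hD
  set S := Matrix.diagonal s with hS
  have hsd : ∀ i, s i * s i * (d i : ℂ) = if d i = 0 then 0 else 1 := by
    intro i
    split_ifs with h
    · simp [h]
    · simp only [hs]
      norm_cast
      rw [← mul_inv, Real.mul_self_sqrt (hd i), inv_mul_cancel₀ h]
  have hSH : Sᴴ = S := by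
    rw [hS, Matrix.diagonal_conjTranspose]; congr 1; ext i; simp [hs]
  have hSDS : S * S * D * S = S := by
    simp only [hS, hD, Matrix.diagonal_mul_diagonal]
    congr 1; ext i; rw [hsd]
    split_ifs with h <;> simp [hs, h]
  have hDSD : D * S * S * D = D := by
    simp only [hS, hD, Matrix.diagonal_mul_diagonal]
    congr 1; ext i
    rw [show (d i : ℂ) * s i * s i * d i = d i * (s i * s i * d i) by ring, hsd]
    split_ifs with h <;> simp [h]
  refine ⟨U * S, ?_, ?_⟩
  · calc Y * (U * S) * (Y * (U * S))ᴴ * (Y * (U * S))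
        = Y * U * S * (S * Uᴴ * (Yᴴ * Y) * U * S) := by
          simp only [Matrix.conjTranspose_mul, hSH, Matrix.mul_assoc]
      _ = Y * U * S * (S * (Uᴴ * U) * D * (Uᴴ * U) * S) := by
          rw [hH]; simp only [Matrix.mul_assoc]
      _ = Y * U * (S * S * D * S) := by
          rw [hU]; simp only [Matrix.mul_assoc, Matrix.mul_one]
      _ = _ := by rw [hSDS, Matrix.mul_assoc]
  · set Q := U * S * S * D * Uᴴ with hQ
    have h1 : Y * (U * S) * (Y * (U * S))ᴴ * Y = Y * Q := by
      calc _ = Y * U * S * S * Uᴴ * (Yᴴ * Y) := by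
            simp only [Matrix.conjTranspose_mul, hSH, Matrix.mul_assoc]
        _ = Y * U * S * S * (Uᴴ * U) * D * Uᴴ := by rw [hH]; simp only [Matrix.mul_assoc]
        _ = _ := by rw [hU, hQ]; simp only [Matrix.mul_assoc, Matrix.one_mul]
    have h2 : (Yᴴ * Y) * Q = Yᴴ * Y := by
      calc _ = U * D * (Uᴴ * U) * S * S * D * Uᴴ := by
            rw [hH, hQ]; simp only [Matrix.mul_assoc]
        _ = U * (D * S * S * D) * Uᴴ := by
            rw [hU]; simp only [Matrix.mul_assoc, Matrix.one_mul]
        _ = _ := by rw [hDSD, hH]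
    have h3 : (Y - Y * Q)ᴴ * (Y - Y * Q) = 0 := by
      have : Yᴴ * (Y - Y * Q) = 0 := by
        rw [Matrix.mul_sub, ← Matrix.mul_assoc, h2, sub_self]
      rw [Matrix.conjTranspose_sub, Matrix.sub_mul, this, Matrix.conjTranspose_mul,
        Matrix.mul_assoc, this]
      simp
    rw [h1]
    exact (sub_eq_zero.mp (Matrix.conjTranspose_mul_self_eq_zero.mp h3)).symm

/-- An effect: a matrix `E` with `0 ≤ E ≤ 1` in the Loewner order, i.e. the first element of a
two-outcome POVM. -/
def IsEffect {n : Type*} [DecidableEq n] (E : Matrix n n ℂ) : Prop :=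
  E.PosSemidef ∧ (1 - E).PosSemidef

/-- An orthogonal projection, as a self-adjoint idempotent matrix. -/
def IsOrthProj {n : Type*} [Fintype n] (E : Matrix n n ℂ) : Prop :=
  Eᴴ = E ∧ E * E = E

lemma IsOrthProj.posSemidef {n : Type*} [Fintype n] {E : Matrix n n ℂ} (h : IsOrthProj E) :
    E.PosSemidef := by
  have := Matrix.posSemidef_conjTranspose_mul_self E
  rwa [h.1, h.2] at this

lemma IsOrthProj.one_sub {n : Type*} [Fintype n] [DecidableEq n] {E : Matrix n n ℂ}
    (h : IsOrthProj E) : IsOrthProj (1 - E) := by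
  constructor
  · rw [Matrix.conjTranspose_sub, h.1, Matrix.conjTranspose_one]
  · simp [Matrix.sub_mul, Matrix.mul_sub, h.2]

/-- Every effect is a convex combination of orthogonal projections: in an eigenbasis its spectrum
is a point of the cube `[0,1]ⁿ`, which is the convex hull of `{0,1}ⁿ`. -/
lemma IsEffect.mem_convexHull {n : Type*} [Fintype n] [DecidableEq n] {E : Matrix n n ℂ}
    (hE : IsEffect E) : E ∈ convexHull ℝ {P : Matrix n n ℂ | IsOrthProj P} := by
  obtain ⟨U, d, hU, hU', hd, hH⟩ := PosSemidef.exists_spectral hE.1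
  have hd1 : ∀ i, d i ≤ 1 := by
    have h := hE.2.conjTranspose_mul_mul_same U
    have h' : Uᴴ * (1 - E) * U = Matrix.diagonal (fun i => ((1 - d i : ℝ) : ℂ)) := by
      calc _ = Uᴴ * U - (Uᴴ * U) * Matrix.diagonal (fun i => (d i : ℂ)) * (Uᴴ * U) := by
            rw [hH]; simp only [Matrix.mul_assoc, Matrix.mul_sub, Matrix.sub_mul, Matrix.one_mul]
        _ = _ := by
            rw [hU, Matrix.one_mul, Matrix.mul_one, ← Matrix.diagonal_one, Matrix.diagonal_sub]
            congr 1; ext i; simp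
    rw [h', Matrix.posSemidef_diagonal_iff] at h
    intro i
    have := h i
    rw [Complex.zero_le_real] at this
    linarith
  let φ : (n → ℝ) →ₗ[ℝ] Matrix n n ℂ :=
    { toFun := fun x => U * Matrix.diagonal (fun i => (x i : ℂ)) * Uᴴ
      map_add' := fun x y => by
        rw [← Matrix.add_mul, ← Matrix.mul_add, Matrix.diagonal_add]
        simp
      map_smul' := fun c x => by
        rw [RingHom.id_apply, ← Matrix.smul_mul, ← Matrix.mul_smul, ← Matrix.diagonal_smul]
        congr 3; ext i; simp }
  have hmem : d ∈ convexHull ℝ (Set.univ.pi fun _ : n => ({0, 1} : Set ℝ)) := by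
    rw [convexHull_pi]
    intro i _
    rw [convexHull_pair, segment_eq_Icc zero_le_one]
    exact ⟨hd i, hd1 i⟩
  have : E ∈ convexHull ℝ (φ '' (Set.univ.pi fun _ : n => ({0, 1} : Set ℝ))) := by
    rw [← φ.image_convexHull]
    exact ⟨d, hmem, hH.symm⟩
  refine convexHull_mono ?_ this
  rintro _ ⟨x, hx, rfl⟩
  have hx' : ∀ i, (x i : ℂ) * x i = x i := by
    intro i
    rcases hx i trivial with h | h
    · simp [h]
    · have : x i = 1 := h
      simp [this]
  constructor
  · change (U * Matrix.diagonal (fun i => (x i : ℂ)) * Uᴴ)ᴴ = _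
    simp only [Matrix.conjTranspose_mul, Matrix.conjTranspose_conjTranspose,
      Matrix.diagonal_conjTranspose, Matrix.mul_assoc]
    change _ = U * Matrix.diagonal (fun i => (x i : ℂ)) * Uᴴ
    rw [Matrix.mul_assoc]
    congr 3; ext i; simp
  · change (U * Matrix.diagonal (fun i => (x i : ℂ)) * Uᴴ) *
      (U * Matrix.diagonal (fun i => (x i : ℂ)) * Uᴴ) =
      U * Matrix.diagonal (fun i => (x i : ℂ)) * Uᴴ
    calc _ = U * Matrix.diagonal (fun i => (x i : ℂ)) * (Uᴴ * U) *
          Matrix.diagonal (fun i => (x i : ℂ)) * Uᴴ := by simp only [Matrix.mul_assoc]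
      _ = _ := by
        rw [hU, Matrix.mul_one, Matrix.mul_assoc U, Matrix.diagonal_mul_diagonal]
        simp only [hx']

/-! ### Jordan's lemma -/

/-- The range of `R` is `C`-invariant, so `C` has an eigenvector in it. -/
lemma exists_common_eigenvector {n : Type*} [Fintype n] [DecidableEq n]
    {R C : Matrix n n ℂ} (hR : R * R = R) (hR0 : R ≠ 0) (hRC : R * C = C * R) :
    ∃ w : n → ℂ, w ≠ 0 ∧ R *ᵥ w = w ∧ ∃ c : ℂ, C *ᵥ w = c • w := by
  let W : Submodule ℂ (n → ℂ) := LinearMap.range (Matrix.toLin' R)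
  have hW : ∀ w, w ∈ W ↔ R *ᵥ w = w := by
    intro w
    constructor
    · rintro ⟨u, rfl⟩
      simp [Matrix.mulVec_mulVec, hR]
    · intro h
      exact ⟨w, by simpa using h⟩
  have : Nontrivial W := by
    rw [Submodule.nontrivial_iff_ne_bot]
    intro h
    apply hR0
    have := LinearMap.range_eq_bot.mp h
    simpa using this
  have hC : ∀ w ∈ W, Matrix.toLin' C w ∈ W := by
    intro w hw
    rw [hW] at hw ⊢
    rw [Matrix.toLin'_apply, Matrix.mulVec_mulVec, hRC, ← Matrix.mulVec_mulVec, hw]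
  obtain ⟨c, hc⟩ := Module.End.exists_eigenvalue ((Matrix.toLin' C).restrict hC)
  obtain ⟨w, hw⟩ := hc.exists_hasEigenvector
  refine ⟨w, ?_, (hW w).mp w.2, c, ?_⟩
  · simpa using hw.2
  · have := congrArg Subtype.val hw.apply_eq_smul
    simpa using this

lemma rank_lt_of_annihilates {n : Type*} [Fintype n] [DecidableEq n] {R R' : Matrix n n ℂ}
    (hR' : R' * R' = R') (hRR' : R * R' = R') {v : n → ℂ} (hv : v ≠ 0)
    (hRv : R *ᵥ v = v) (hRv' : R' *ᵥ v = 0) : R'.rank < R.rank := by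
  apply Submodule.finrank_lt_finrank_of_lt
  rw [SetLike.lt_iff_le_and_exists]
  constructor
  · rintro _ ⟨u, rfl⟩
    exact ⟨R' *ᵥ u, by simp [Matrix.mulVec_mulVec, hRR']⟩
  · refine ⟨v, ⟨v, hRv⟩, ?_⟩
    rintro ⟨u, hu⟩
    apply hv
    rw [Matrix.mulVecLin_apply] at hu
    rw [← hu, ← hR', ← Matrix.mulVec_mulVec, hu, hRv']

section Jordan

variable {n : Type*} [Fintype n] [DecidableEq n]

/-- Two projections `p`, `q` commuting with a nonzero projection `R` leave invariant a nonzero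
subspace of dimension at most two of the range of `R`, spanned by the columns `v`, `q v` of `Y`.
Here `v` is a joint eigenvector of `p` and of `(p - q)²`, which commutes with `p` and `q`. The
columns of `Y` may be linearly dependent. -/
lemma exists_invariant_plane {R p q : Matrix n n ℂ} (hR : R * R = R)
    (hR0 : R ≠ 0) (hp : p * p = p) (hq : q * q = q) (hRp : R * p = p * R) (hRq : R * q = q * R) :
    ∃ (v : n → ℂ) (Y : Matrix n (Fin 2) ℂ) (A B : Matrix (Fin 2) (Fin 2) ℂ), v ≠ 0 ∧
      (∀ i, Y i 0 = v i) ∧ R * Y = Y ∧ p * Y = Y * A ∧ q * Y = Y * B := by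
  set C := (p - q) * (p - q) with hC
  have hC' : C = p + q - p * q - q * p := by
    rw [hC, Matrix.sub_mul, Matrix.mul_sub, Matrix.mul_sub, hp, hq]; abel
  have hRC : R * C = C * R := by
    have : R * (p - q) = (p - q) * R := by rw [Matrix.mul_sub, Matrix.sub_mul, hRp, hRq]
    rw [hC, ← Matrix.mul_assoc, this, Matrix.mul_assoc, this, Matrix.mul_assoc]
  obtain ⟨w, hw0, hRw, c, hCw⟩ := exists_common_eigenvector hR hR0 hRC
  have hpC : C * p = p * C := by
    rw [hC']
    simp only [Matrix.mul_sub, Matrix.sub_mul, Matrix.mul_add, Matrix.add_mul, ← Matrix.mul_assoc, hp]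
    simp only [Matrix.mul_assoc, hp]
    abel
  obtain ⟨v, hv0, hRv, hCv, e, hpv⟩ : ∃ v : n → ℂ, v ≠ 0 ∧ R *ᵥ v = v ∧ C *ᵥ v = c • v ∧
      ∃ e : ℂ, p *ᵥ v = e • v := by
    by_cases h : p *ᵥ w = 0
    · exact ⟨w, hw0, hRw, hCw, 0, by simpa using h⟩
    · refine ⟨p *ᵥ w, h, ?_, ?_, 1, ?_⟩
      · rw [Matrix.mulVec_mulVec, hRp, ← Matrix.mulVec_mulVec, hRw]
      · rw [Matrix.mulVec_mulVec, hpC, ← Matrix.mulVec_mulVec, hCw, Matrix.mulVec_smul]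
      · rw [Matrix.mulVec_mulVec, hp, one_smul]
  -- the identity `p q = p + q - q p - (p - q)²` evaluated at `v`
  have hpqv : p *ᵥ (q *ᵥ v) = (e - c) • v + (1 - e) • (q *ᵥ v) := by
    have : p * q = p + q - q * p - C := by rw [hC']; abel
    rw [Matrix.mulVec_mulVec, this, Matrix.sub_mulVec, Matrix.sub_mulVec, Matrix.add_mulVec,
      ← Matrix.mulVec_mulVec, hpv, hCv, Matrix.mulVec_smul]
    module
  have hmul : ∀ (T : Matrix n n ℂ) (u : Fin 2 → n → ℂ),
      T * (Matrix.of u)ᵀ = (Matrix.of fun j => T *ᵥ u j)ᵀ := fun T u => rfl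
  refine ⟨v, (Matrix.of ![v, q *ᵥ v])ᵀ, Matrix.of ![![e, e - c], ![0, 1 - e]],
    Matrix.of ![![0, 0], ![1, 1]], hv0,
    fun i => rfl, ?_, ?_, ?_⟩
  · rw [hmul]
    ext i j
    fin_cases j
    · simp [hRv]
    · simp [Matrix.mulVec_mulVec, hRq]
      rw [← Matrix.mulVec_mulVec, hRv]
  · rw [hmul]
    ext i j
    fin_cases j
    · simp [hpv, Matrix.mul_apply, mul_comm]
    · simp [hpqv, Matrix.mul_apply, mul_comm]
  · rw [hmul]
    ext i j
    fin_cases j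
    · simp [Matrix.mul_apply]
    · simp [Matrix.mulVec_mulVec, hq, Matrix.mul_apply]

/-- Conical form of Jordan's lemma: a cone containing all triples compressed from dimension two
contains `(R, R * Q 0, R * Q 1)` for projections `Q 0`, `Q 1` commuting with the projection `R`.
The induction on the rank of `R` splits off an invariant subspace of dimension at most two. -/
lemma jordan_proj (K : PointedCone ℝ (Matrix n n ℂ × (Fin 2 → Matrix n n ℂ)))
    (hK : ∀ (V : Matrix n (Fin 2) ℂ) (M : Fin 2 → Matrix (Fin 2) (Fin 2) ℂ),
      (∀ x, IsEffect (M x)) → (V * Vᴴ, fun x => V * M x * Vᴴ) ∈ K)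
    (Q : Fin 2 → Matrix n n ℂ) (hQ : ∀ x, IsOrthProj (Q x)) (R : Matrix n n ℂ)
    (hR : IsOrthProj R) (hRQ : ∀ x, R * Q x = Q x * R) :
    (R, fun x => R * Q x) ∈ K := by
  induction hk : R.rank using Nat.strong_induction_on generalizing R with
  | _ k ih =>
  by_cases hR0 : R = 0
  · subst hR0
    convert K.zero_mem using 1
    ext <;> simp
  obtain ⟨v, Y, A, B, hv0, hYv, hRY, hpY, hqY⟩ := exists_invariant_plane hR.2 hR0
    (hQ 0).2 (hQ 1).2 (hRQ 0) (hRQ 1)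
  obtain ⟨Z, hV, hVY⟩ := exists_partialIsometry Y
  set V := Y * Z with hVdef
  have hQY : ∀ x, ∃ A : Matrix (Fin 2) (Fin 2) ℂ, Q x * Y = Y * A := by
    intro x; fin_cases x
    exacts [⟨A, hpY⟩, ⟨B, hqY⟩]
  set R' := V * Vᴴ with hR'
  have hR'h : R'ᴴ = R' := by simp [hR', Matrix.conjTranspose_mul]
  have hR'p : R' * R' = R' := by
    rw [hR', ← Matrix.mul_assoc, hV]
  have hQR' : ∀ x, R' * Q x = R' * Q x * R' := by
    intro x
    obtain ⟨A, hA⟩ := hQY x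
    have h1 : R' * (Q x * R') = Q x * R' := by
      have : Q x * R' = Y * (A * Z * Vᴴ) := by
        rw [hR']; nth_rewrite 1 [hVdef]
        rw [← Matrix.mul_assoc, ← Matrix.mul_assoc, hA]; simp only [Matrix.mul_assoc]
      rw [this, ← Matrix.mul_assoc, hVY]
    have h2 := congrArg Matrix.conjTranspose h1
    simp only [Matrix.conjTranspose_mul, hR'h, (hQ x).1] at h2
    exact h2.symm
  have hcomm : ∀ x, R' * Q x = Q x * R' := by
    intro x
    have h2 := congrArg Matrix.conjTranspose (hQR' x)
    simp only [Matrix.conjTranspose_mul, hR'h, (hQ x).1] at h2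
    rw [h2, hQR' x, Matrix.mul_assoc]
  have hRR' : R * R' = R' := by
    rw [hR', hVdef, ← Matrix.mul_assoc, ← Matrix.mul_assoc, hRY]
  have hR'R : R' * R = R' := by
    have h2 := congrArg Matrix.conjTranspose hRR'
    simpa only [Matrix.conjTranspose_mul, hR'h, hR.1] using h2
  have hsub : IsOrthProj (R - R') := by
    constructor
    · rw [Matrix.conjTranspose_sub, hR.1, hR'h]
    · rw [Matrix.sub_mul, Matrix.mul_sub, Matrix.mul_sub, hR.2, hRR', hR'R, hR'p]; abel
  have hcol : (fun i => Y i 0) = v := funext hYv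
  have hRv : R *ᵥ v = v := by
    rw [← hcol]
    ext i
    exact congrFun (congrFun hRY i) 0
  have hR'v : R' *ᵥ v = v := by
    rw [← hcol]
    ext i
    exact congrFun (congrFun hVY i) 0
  have hlt : (R - R').rank < k := by
    rw [← hk]
    refine rank_lt_of_annihilates hsub.2 ?_ hv0 hRv ?_
    · rw [Matrix.mul_sub, hR.2, hRR']
    · rw [Matrix.sub_mulVec, hRv, hR'v, sub_self]
  have hrest := ih _ hlt (R - R') hsub (fun x => by
    rw [Matrix.sub_mul, Matrix.mul_sub, hRQ, hcomm]) rfl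
  have hVV : IsOrthProj (Vᴴ * V) := by
    constructor
    · simp [Matrix.conjTranspose_mul]
    · rw [Matrix.mul_assoc, ← Matrix.mul_assoc V, hV]
  have hblock := hK V (fun x => Vᴴ * Q x * V) (fun x => by
    refine ⟨(hQ x).posSemidef.conjTranspose_mul_mul_same V, ?_⟩
    have h2 : 1 - Vᴴ * Q x * V = (1 - Vᴴ * V) + Vᴴ * (1 - Q x) * V := by
      rw [Matrix.mul_sub, Matrix.sub_mul, Matrix.mul_one]; abel
    rw [h2]
    exact hVV.one_sub.posSemidef.add ((hQ x).one_sub.posSemidef.conjTranspose_mul_mul_same V))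
  convert K.add_mem hblock hrest using 1
  ext1
  · simp [hR']
  · ext1 x
    have : V * (Vᴴ * Q x * V) * Vᴴ = R' * Q x := by
      rw [hQR']; simp only [hR', Matrix.mul_assoc]
    simp [this, Matrix.sub_mul]

/-- Jordan's lemma for a pair of effects, by convexity of a cone in the pair of effects. -/
lemma jordan_effect (K : PointedCone ℝ (Matrix n n ℂ × (Fin 2 → Matrix n n ℂ)))
    (hK : ∀ (V : Matrix n (Fin 2) ℂ) (M : Fin 2 → Matrix (Fin 2) (Fin 2) ℂ),
      (∀ x, IsEffect (M x)) → (V * Vᴴ, fun x => V * M x * Vᴴ) ∈ K)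
    (E : Fin 2 → Matrix n n ℂ) (hE : ∀ x, IsEffect (E x)) : (1, E) ∈ K := by
  have hmem : E ∈ convexHull ℝ
      (Set.univ.pi fun _ : Fin 2 => {P : Matrix n n ℂ | IsOrthProj P}) := by
    rw [convexHull_pi]
    exact fun x _ => (hE x).mem_convexHull
  have hconv : Convex ℝ {G : Fin 2 → Matrix n n ℂ | ((1 : Matrix n n ℂ), G) ∈ K} := by
    intro G hG G' hG' a b ha hb hab
    have := K.convex hG hG' ha hb hab
    simpa [← add_smul, hab] using this
  refine convexHull_min ?_ hconv hmem
  intro G hG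
  have := jordan_proj K hK G (fun x => hG x trivial) 1 ⟨by simp, by simp⟩ (fun x => by simp)
  simpa using this

end Jordan

/-! ### Instrumental tables in matrix form -/

section Tables

variable {n m : Type*} [Fintype n] [Fintype m]

/-- Writing a bipartite vector as a matrix `Z` from Alice's to Bob's space turns the Born rule
into a trace on Bob's space, at the cost of transposing Alice's operator. -/
lemma trace_vecMulVec_kronecker (Z : Matrix m n ℂ) (M : Matrix n n ℂ) (N : Matrix m m ℂ) :
    (Matrix.vecMulVec (fun p : n × m => Z p.2 p.1) (star fun p : n × m => Z p.2 p.1) *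
      (Mᵀ ⊗ₖ N)).trace = (N * (Z * M * Zᴴ)).trace := by
  simp only [Matrix.trace, Matrix.diag_apply, Matrix.mul_apply, Matrix.vecMulVec_apply,
    Matrix.kroneckerMap_apply, Matrix.transpose_apply, Matrix.conjTranspose_apply, Pi.star_apply,
    Fintype.sum_prod_type, Finset.mul_sum, Finset.sum_mul]
  calc _ = ∑ j, ∑ i, ∑ j', ∑ i', Z j i * star (Z j' i') * (M i i' * N j' j) := by
        rw [Finset.sum_comm]
        exact Finset.sum_congr rfl fun j _ => Finset.sum_congr rfl fun i _ => Finset.sum_comm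
    _ = ∑ j, ∑ j', ∑ i', ∑ i, Z j i * star (Z j' i') * (M i i' * N j' j) := by
        refine Finset.sum_congr rfl fun j _ => ?_
        rw [Finset.sum_comm]
        exact Finset.sum_congr rfl fun j' _ => Finset.sum_comm
    _ = _ := by
        rw [Finset.sum_comm]
        refine Finset.sum_congr rfl fun j' _ => Finset.sum_congr rfl fun j _ =>
          Finset.sum_congr rfl fun i' _ => Finset.sum_congr rfl fun i _ => ?_
        ring

/-- The operator of outcome `a` of a two-outcome measurement with total `F` whose outcome `0` has
operator `G`. -/
def outcome (a : Fin 2) (F G : Matrix n n ℂ) : Matrix n n ℂ := if a = 0 then G else F - G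

/-- The table `P(a,b|x) = Tr[N_{b|a} X M_{a|x} Xᴴ]`, where `M_{0|x} = p.2 x` and
`M_{1|x} = p.1 - p.2 x`. It is linear in the pair `p`; the first component is the identity for an
actual measurement, and is left free so that the table can be split along a decomposition of the
identity. `X` encodes a possibly unnormalized bipartite vector, and the real part is taken so that
the values are real by definition. -/
def table {nb : ℕ} (N : Fin 2 → Fin nb → Matrix m m ℂ) (X : Matrix m n ℂ) :
    (Matrix n n ℂ × (Fin 2 → Matrix n n ℂ)) →ₗ[ℝ] (Fin 2 → Fin 2 → Fin nb → ℝ) where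
  toFun p := fun x a b => (N a b * (X * outcome a p.1 (p.2 x) * Xᴴ)).trace.re
  map_add' p q := by
    ext x a b
    have : outcome a (p + q).1 ((p + q).2 x) = outcome a p.1 (p.2 x) + outcome a q.1 (q.2 x) := by
      unfold outcome; split_ifs <;> simp; abel
    rw [this]
    simp [Matrix.mul_add, Matrix.add_mul]
  map_smul' c p := by
    ext x a b
    have : outcome a (c • p).1 ((c • p).2 x) = c • outcome a p.1 (p.2 x) := by
      unfold outcome; split_ifs <;> simp [smul_sub]
    rw [this]
    simp

lemma table_apply {nb : ℕ} (N : Fin 2 → Fin nb → Matrix m m ℂ) (X : Matrix m n ℂ) (p) (x a b) :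
    table N X p x a b = (N a b * (X * outcome a p.1 (p.2 x) * Xᴴ)).trace.re := rfl

end Tables

lemma outcome_isPOVM {n : Type*} [Fintype n] [DecidableEq n] {G : Matrix n n ℂ} (hG : IsEffect G) :
    IsPOVM (fun a => (outcome a 1 G)ᵀ) := by
  constructor
  · intro a
    fin_cases a
    · exact hG.1.transpose
    · exact hG.2.transpose
  · simp [outcome]

lemma trace_mul_im {n : Type*} [Fintype n] {A B : Matrix n n ℂ} (hA : Aᴴ = A)
    (hB : Bᴴ = B) : (A * B).trace.im = 0 := by
  have h := Matrix.trace_conjTranspose (A * B)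
  rw [Matrix.conjTranspose_mul, hA, hB, Matrix.trace_mul_comm] at h
  exact Complex.conj_eq_iff_im.mp h.symm

/-! ### Reduction to two qubits -/

/-- The convex cone generated by the tables of pure two-qubit realizations. -/
def twoQubitCone (nb : ℕ) : PointedCone ℝ (Fin 2 → Fin 2 → Fin nb → ℝ) :=
  PointedCone.hull ℝ {P | RealizesInstrPure 2 2 nb 2 2 P}

/-- After normalizing `Z`, a nonzero table of `2 × 2` matrices is a pure two-qubit table. -/
lemma table_two_qubit_mem {nb : ℕ} {N : Fin 2 → Fin nb → Matrix (Fin 2) (Fin 2) ℂ}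
    (hN : ∀ a, IsPOVM (N a)) (Z : Matrix (Fin 2) (Fin 2) ℂ)
    {G : Fin 2 → Matrix (Fin 2) (Fin 2) ℂ} (hG : ∀ x, IsEffect (G x)) :
    table N Z (1, G) ∈ twoQubitCone nb := by
  set r : ℝ := ∑ p : Fin 2 × Fin 2, Complex.normSq (Z p.2 p.1) with hr
  have hr0 : 0 ≤ r := Finset.sum_nonneg fun _ _ => Complex.normSq_nonneg _
  rcases hr0.eq_or_lt with h0 | hpos
  · have hZ : Z = 0 := by
      ext i j
      have := (Finset.sum_eq_zero_iff_of_nonneg (fun p _ => Complex.normSq_nonneg _)).mp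
        h0.symm (j, i) (Finset.mem_univ _)
      simpa using this
    have : table N Z (1, G) = 0 := by
      ext x a b; simp [table_apply, hZ]
    rw [this]; exact zero_mem _
  · set Z' : Matrix (Fin 2) (Fin 2) ℂ := (((√r)⁻¹ : ℝ) : ℂ) • Z with hZ'
    have hsq : √r * √r = r := Real.mul_self_sqrt hr0
    have hs0 : √r ≠ 0 := (Real.sqrt_pos.mpr hpos).ne'
    have hmem : table N Z' (1, G) ∈ twoQubitCone nb := by
      apply Submodule.subset_span
      refine ⟨fun p => Z' p.2 p.1, ?_, fun x a => (outcome a 1 (G x))ᵀ, N,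
        fun x => outcome_isPOVM (hG x), hN, fun x a b => ?_⟩
      · simp only [hZ', Matrix.smul_apply, smul_eq_mul, Complex.normSq_mul, ← Finset.mul_sum,
          Complex.normSq_ofReal]
        rw [← hr, ← mul_inv, hsq, inv_mul_cancel₀ hpos.ne']
      · rw [trace_vecMulVec_kronecker, table_apply]
        apply Complex.ext
        · simp
        · rw [Complex.ofReal_im, trace_mul_im ((hN a).1 b).1]
          have h := (outcome_isPOVM (hG x)).1 a
          have h' := h.transpose
          rw [Matrix.transpose_transpose] at h'
          exact (h'.mul_mul_conjTranspose_same Z').1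
    have hZZ : Z = ((√r : ℝ) : ℂ) • Z' := by
      rw [hZ', smul_smul, ← Complex.ofReal_mul, mul_inv_cancel₀ hs0]; simp
    have : table N Z (1, G) = (⟨r, hr0⟩ : {c : ℝ // 0 ≤ c}) • table N Z' (1, G) := by
      ext x a b
      change _ = r * _
      rw [table_apply, table_apply, hZZ]
      simp [Matrix.conjTranspose_smul, smul_smul, ← mul_assoc, hsq]
    rw [this]
    exact Submodule.smul_mem _ _ hmem

/-- If Alice holds a qubit, Bob's space can be compressed to dimension two: `Y = W * Z` for a
partial isometry `W` with two columns. The compressed operators `Wᴴ * N a b * W` sum to `Wᴴ * W`;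
the missing part `1 - Wᴴ * W`, which kills `Z`, is added to one outcome. -/
lemma table_qubit_mem {nb dB : ℕ} {N : Fin 2 → Fin nb → Matrix (Fin dB) (Fin dB) ℂ}
    (hN : ∀ a, IsPOVM (N a)) (Y : Matrix (Fin dB) (Fin 2) ℂ)
    {G : Fin 2 → Matrix (Fin 2) (Fin 2) ℂ} (hG : ∀ x, IsEffect (G x)) :
    table N Y (1, G) ∈ twoQubitCone nb := by
  -- without outcomes for Bob there is a single table, which is zero
  rcases Nat.eq_zero_or_pos nb with rfl | hnb
  · have : table N Y (1, G) = 0 := by ext x a b; exact b.elim0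
    rw [this]; exact zero_mem _
  let b₀ : Fin nb := ⟨0, hnb⟩
  obtain ⟨B, hW, hWY⟩ := exists_partialIsometry Y
  set W := Y * B
  set Z := Wᴴ * Y with hZ
  have hY : Y = W * Z := by rw [hZ, ← Matrix.mul_assoc, hWY]
  have hproj : IsOrthProj (Wᴴ * W) := by
    constructor
    · simp [Matrix.conjTranspose_mul]
    · rw [Matrix.mul_assoc, ← Matrix.mul_assoc W, hW]
  let N' : Fin 2 → Fin nb → Matrix (Fin 2) (Fin 2) ℂ := fun a b =>
    Wᴴ * N a b * W + if b = b₀ then 1 - Wᴴ * W else 0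
  have hN' : ∀ a, IsPOVM (N' a) := by
    intro a
    constructor
    · intro b
      refine (((hN a).1 b).conjTranspose_mul_mul_same W).add ?_
      split_ifs
      · exact hproj.one_sub.posSemidef
      · exact Matrix.PosSemidef.zero
    · have h : ∑ b, Wᴴ * N a b * W = Wᴴ * W := by
        rw [← Matrix.sum_mul, ← Matrix.mul_sum, (hN a).2, Matrix.mul_one]
      simp [N', Finset.sum_add_distrib, h]
  have hZ0 : (1 - Wᴴ * W) * Z = 0 := by
    rw [hZ, Matrix.sub_mul, Matrix.one_mul, Matrix.mul_assoc, ← Matrix.mul_assoc W, hWY, sub_self]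
  have : table N Y (1, G) = table N' Z (1, G) := by
    ext x a b
    rw [table_apply, table_apply]
    congr 1
    have h0 : (if b = b₀ then 1 - Wᴴ * W else 0) * Z = 0 := by
      split_ifs
      · exact hZ0
      · simp
    have h1 : N' a b * (Z * outcome a 1 (G x) * Zᴴ) =
        Wᴴ * (N a b * W * Z * outcome a 1 (G x) * Zᴴ) := by
      calc _ = (N' a b * Z) * outcome a 1 (G x) * Zᴴ := by simp only [Matrix.mul_assoc]
        _ = _ := by
          simp only [N', Matrix.add_mul, h0, add_zero]
          simp only [Matrix.mul_assoc]
    dsimp only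
    rw [h1, Matrix.trace_mul_comm Wᴴ, hY]
    simp only [Matrix.conjTranspose_mul, Matrix.mul_assoc]
  rw [this]
  exact table_two_qubit_mem hN' Z hG

/-- Jordan's lemma reduces Alice's space to a qubit. -/
lemma table_mem {nb dA dB : ℕ} {N : Fin 2 → Fin nb → Matrix (Fin dB) (Fin dB) ℂ}
    (hN : ∀ a, IsPOVM (N a)) (X : Matrix (Fin dB) (Fin dA) ℂ)
    {E : Fin 2 → Matrix (Fin dA) (Fin dA) ℂ} (hE : ∀ x, IsEffect (E x)) :
    table N X (1, E) ∈ twoQubitCone nb := by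
  refine jordan_effect ((twoQubitCone nb).comap (table N X)) (fun V M hM => ?_) E hE
  rw [PointedCone.mem_comap]
  have : table N X (V * Vᴴ, fun x => V * M x * Vᴴ) = table N (X * V) (1, M) := by
    ext x a b
    rw [table_apply, table_apply]
    have : outcome a (V * Vᴴ) (V * M x * Vᴴ) = V * outcome a 1 (M x) * Vᴴ := by
      unfold outcome; split_ifs
      · rfl
      · simp [Matrix.mul_sub, Matrix.sub_mul]
    dsimp only
    rw [this]
    simp only [Matrix.conjTranspose_mul, Matrix.mul_assoc]
  rw [this]
  exact table_qubit_mem hN (X * V) hM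

lemma RealizesInstr.mem_twoQubitCone {nb dA dB : ℕ} {P : Fin 2 → Fin 2 → Fin nb → ℝ}
    (h : RealizesInstr 2 2 nb dA dB P) : P ∈ twoQubitCone nb := by
  obtain ⟨ρ, hρ, M, N, hM, hN, hP⟩ := h
  obtain ⟨k, ψ, rfl⟩ := Matrix.posSemidef_iff_eq_sum_vecMulVec.mp hρ.1
  have h1 : ∀ x, M x 1 = 1 - M x 0 := fun x => by
    rw [← (hM x).2, Fin.sum_univ_two]; abel
  have hE : ∀ x, IsEffect (M x 0)ᵀ := fun x => by
    refine ⟨((hM x).1 0).transpose, ?_⟩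
    have := ((hM x).1 1).transpose
    rwa [h1, Matrix.transpose_sub, Matrix.transpose_one] at this
  have hPsum : P = ∑ l, table N (Matrix.of fun j i => ψ l (i, j)) (1, fun x => (M x 0)ᵀ) := by
    ext x a b
    rw [← Complex.ofReal_re (P x a b), hP, Finset.sum_mul, Matrix.trace_sum, Complex.re_sum]
    simp only [Finset.sum_apply]
    refine Finset.sum_congr rfl fun l _ => ?_
    rw [table_apply, ← trace_vecMulVec_kronecker]
    have ho : (outcome a 1 (M x 0)ᵀ)ᵀ = M x a := by
      fin_cases a
      · simp [outcome]
      · simp [outcome, h1]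
    dsimp only
    rw [ho]
    rfl
  rw [hPsum]
  exact Submodule.sum_mem _ fun l _ => table_mem hN _ hE

lemma sum_trace_povm {nb dA dB : ℕ} (ρ : Matrix (Fin dA × Fin dB) (Fin dA × Fin dB) ℂ)
    {M : Fin 2 → Matrix (Fin dA) (Fin dA) ℂ} {N : Fin 2 → Fin nb → Matrix (Fin dB) (Fin dB) ℂ}
    (hM : IsPOVM M) (hN : ∀ a, IsPOVM (N a)) :
    ∑ a, ∑ b, (ρ * (M a ⊗ₖ N a b)).trace = ρ.trace := by
  have h : ∀ a, ∑ b, (ρ * (M a ⊗ₖ N a b)).trace = (ρ * (M a ⊗ₖ 1)).trace := by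
    intro a
    rw [← Matrix.trace_sum, ← Finset.mul_sum, ← (hN a).2]
    congr 2
    ext i j
    simp [Matrix.sum_apply, Finset.mul_sum]
  simp only [h]
  rw [← Matrix.trace_sum, ← Finset.mul_sum]
  have : ∑ a, (M a ⊗ₖ (1 : Matrix (Fin dB) (Fin dB) ℂ)) = 1 := by
    rw [← Matrix.one_kronecker_one, ← hM.2]
    ext i j
    simp [Matrix.sum_apply, add_mul]
  rw [this, Matrix.mul_one]

lemma RealizesInstr.sum_eq_one {nb dA dB : ℕ} {P : Fin 2 → Fin 2 → Fin nb → ℝ}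
    (h : RealizesInstr 2 2 nb dA dB P) : ∑ a, ∑ b, P 0 a b = 1 := by
  obtain ⟨ρ, hρ, M, N, hM, hN, hP⟩ := h
  have := sum_trace_povm ρ (hM 0) hN
  simp only [← hP, hρ.2] at this
  exact_mod_cast this

lemma RealizesInstrPure.realizesInstr {nb dA dB : ℕ} {P : Fin 2 → Fin 2 → Fin nb → ℝ}
    (h : RealizesInstrPure 2 2 nb dA dB P) : RealizesInstr 2 2 nb dA dB P := by
  obtain ⟨ψ, hψ, rest⟩ := h
  refine ⟨_, ⟨Matrix.posSemidef_vecMulVec_self_star ψ, ?_⟩, rest⟩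
  rw [Matrix.trace_vecMulVec, dotProduct]
  simp only [Pi.star_apply, RCLike.star_def, Complex.mul_conj]
  exact_mod_cast hψ

/-- A point of the cone over `s` lying on a hyperplane `L = 1` that contains `s` is a convex
combination of points of `s`. -/
lemma mem_convexHull_of_mem_hull {E : Type*} [AddCommGroup E] [Module ℝ E] {s : Set E}
    {L : E →ₗ[ℝ] ℝ} (hL : ∀ p ∈ s, L p = 1) {x : E} (hx : x ∈ PointedCone.hull ℝ s)
    (hx1 : L x = 1) : x ∈ convexHull ℝ s := by
  have key : x = 0 ∨ x ∈ ConvexCone.hull ℝ (convexHull ℝ s) := by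
    clear hx1
    induction hx using Submodule.span_induction with
    | mem x h => exact Or.inr (ConvexCone.subset_hull (subset_convexHull ℝ s h))
    | zero => exact Or.inl rfl
    | add x y _ _ hx hy =>
      rcases hx with rfl | hx
      · simpa using hy
      · rcases hy with rfl | hy
        · simpa using Or.inr hx
        · exact Or.inr ((ConvexCone.hull ℝ _).add_mem hx hy)
    | smul c x _ hx =>
      rcases hx with rfl | hx
      · exact Or.inl (smul_zero c)
      · rcases c.2.eq_or_lt with h0 | h0
        · exact Or.inl (by rw [show c = 0 from Subtype.ext h0.symm, zero_smul])
        · exact Or.inr ((ConvexCone.hull ℝ _).smul_mem h0 hx)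
  rcases key with rfl | hx
  · simp at hx1
  · rw [ConvexCone.mem_hull_of_convex (convex_convexHull ℝ s)] at hx
    obtain ⟨r, -, p, hp, rfl⟩ := hx
    have hLp : L p = 1 :=
      convexHull_min (t := {p | L p = 1}) hL (convex_hyperplane L.isLinear 1) hp
    have hr : r = 1 := by simpa [hLp] using hx1
    simpa [hr] using hp

theorem sup_convex_function_instrumental_two_qubits (nb : ℕ)
    (f : (Fin 2 → Fin 2 → Fin nb → ℝ) → ℝ)
    (hf : ConvexOn ℝ Set.univ f) :
    sSup (f '' InstrQuantumSet 2 2 nb) =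
      sSup (f '' {P | RealizesInstrPure 2 2 nb 2 2 P}) := by
  set S := {P | RealizesInstrPure 2 2 nb 2 2 P} with hS
  have hsub : S ⊆ InstrQuantumSet 2 2 nb := fun P hP =>
    ⟨2, 2, RealizesInstrPure.realizesInstr hP⟩
  let L : (Fin 2 → Fin 2 → Fin nb → ℝ) →ₗ[ℝ] ℝ :=
    ∑ a, ∑ b, LinearMap.proj b ∘ₗ LinearMap.proj a ∘ₗ LinearMap.proj 0
  have hLapp : ∀ P, L P = ∑ a, ∑ b, P 0 a b := fun P => by
    simp [L, LinearMap.sum_apply]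
  have hdom : ∀ P ∈ InstrQuantumSet 2 2 nb, ∃ Q ∈ S, f P ≤ f Q := by
    rintro P ⟨dA, dB, hP⟩
    refine hf.exists_ge_of_mem_convexHull (Set.subset_univ S) ?_
    refine mem_convexHull_of_mem_hull (L := L) (fun Q hQ => ?_) hP.mem_twoQubitCone ?_
    · rw [hLapp]; exact (RealizesInstrPure.realizesInstr hQ).sum_eq_one
    · rw [hLapp]; exact hP.sum_eq_one
  by_cases hne : S.Nonempty
  · have hub : upperBounds (f '' InstrQuantumSet 2 2 nb) = upperBounds (f '' S) := by
      refine Set.Subset.antisymm (upperBounds_mono_set (Set.image_mono hsub)) ?_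
      rintro c hc _ ⟨P, hP, rfl⟩
      obtain ⟨Q, hQ, hle⟩ := hdom P hP
      exact hle.trans (hc ⟨Q, hQ, rfl⟩)
    by_cases hb : BddAbove (f '' S)
    · have h1 := isLUB_csSup (hne.image f) hb
      refine IsLUB.csSup_eq ?_ ((hne.mono hsub).image f)
      rw [IsLUB, hub]; exact h1
    · have hb' : ¬ BddAbove (f '' InstrQuantumSet 2 2 nb) := by
        rwa [BddAbove, hub]
      rw [Real.sSup_of_not_bddAbove hb, Real.sSup_of_not_bddAbove hb']
  · have : InstrQuantumSet 2 2 nb = S := by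
      refine Set.Subset.antisymm (fun P hP => ?_) hsub
      obtain ⟨Q, hQ, -⟩ := hdom P hP
      exact (hne ⟨Q, hQ⟩).elim
    rw [this]
end
end
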